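/- arXiv:2110.02796 — 8 statements merged into one kernel-verified Lean document; each statement's English description precedes it below -/
import Mathlib

section
/- For every classifier W = (w_1,…,w_K) and feature matrix H = (h_{k,i}), the margin satisfies q_min(W,H) ≤ (‖W‖_F² + ‖H‖_F²) / (2(K−1)√n). -/
open scoped BigOperators RealInnerProductSpace
open Finset

noncomputable def sWH {K n d : ℕ} (W : Fin K → EuclideanSpace ℝ (Fin d))
    (H : Fin K → Fin n → EuclideanSpace ℝ (Fin d)) (k : Fin K) (i : Fin n) (j : Fin K) : ℝ :=
  ⟪W k - W j, H k i⟫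

noncomputable def WF2 {K d : ℕ} (W : Fin K → EuclideanSpace ℝ (Fin d)) : ℝ := ∑ k, ‖W k‖ ^ 2

noncomputable def HF2 {K n d : ℕ} (H : Fin K → Fin n → EuclideanSpace ℝ (Fin d)) : ℝ :=
  ∑ k, ∑ i, ‖H k i‖ ^ 2

noncomputable def qmin {K n d : ℕ} (W : Fin K → EuclideanSpace ℝ (Fin d))
    (H : Fin K → Fin n → EuclideanSpace ℝ (Fin d)) : ℝ :=
  sInf {x : ℝ | ∃ k i j, j ≠ k ∧ x = sWH W H k i j}

noncomputable def LWH {K n d : ℕ} (W : Fin K → EuclideanSpace ℝ (Fin d))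
    (H : Fin K → Fin n → EuclideanSpace ℝ (Fin d)) : ℝ :=
  ∑ k, ∑ i, Real.log (1 + ∑ j ∈ univ.filter (fun j => j ≠ k), Real.exp (-(sWH W H k i j)))

theorem margin_upper_bound {K n d : ℕ} (hK : 2 ≤ K) (hn : 1 ≤ n) (hd : 1 ≤ d)
    (W : Fin K → EuclideanSpace ℝ (Fin d)) (H : Fin K → Fin n → EuclideanSpace ℝ (Fin d)) :
    qmin W H ≤ (WF2 W + HF2 H) / (2 * ((K : ℝ) - 1) * Real.sqrt n) := by
  have hK' : (2 : ℝ) ≤ K := by exact_mod_cast hK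
  have hn' : (1 : ℝ) ≤ n := by exact_mod_cast hn
  have hK0 : (K : ℝ) ≠ 0 := by linarith
  obtain ⟨s, hs⟩ : ∃ s, s = Real.sqrt n := ⟨_, rfl⟩
  have hs0 : 0 < s := by rw [hs]; exact Real.sqrt_pos.2 (by linarith)
  have hs2 : s ^ 2 = n := by rw [hs]; exact Real.sq_sqrt (by linarith)
  rw [← hs]
  obtain ⟨q, hq⟩ : ∃ q, q = qmin W H := ⟨_, rfl⟩
  rw [← hq]
  have hle : ∀ k i j, j ≠ k → q ≤ sWH W H k i j := by
    intro k i j hj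
    rw [hq]
    refine csInf_le ?_ (show sWH W H k i j ∈ {x : ℝ | ∃ k i j, j ≠ k ∧ x = sWH W H k i j} from
      ⟨k, i, j, hj, rfl⟩)
    apply Set.Finite.bddBelow
    apply (Set.finite_range
      (fun p : Fin K × Fin n × Fin K => sWH W H p.1 p.2.1 p.2.2)).subset
    rintro x ⟨k, i, j, _, rfl⟩
    exact ⟨(k, i, j), rfl⟩
  obtain ⟨m, hm⟩ : ∃ m, m = (K : ℝ)⁻¹ • ∑ k, W k := ⟨_, rfl⟩
  have hmS : ∑ k, W k = (K : ℝ) • m := by rw [hm, smul_smul, mul_inv_cancel₀ hK0, one_smul]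
  have h1 : ∀ k i, ((K : ℝ) - 1) * q ≤ K * ⟪W k - m, H k i⟫ := by
    intro k i
    have e1 : ∑ j, sWH W H k i j = K * ⟪W k - m, H k i⟫ := by
      simp only [sWH]
      rw [← sum_inner, Finset.sum_sub_distrib, hmS, ← real_inner_smul_left, smul_sub]
      simp [← Nat.cast_smul_eq_nsmul ℝ]
    have e2 : sWH W H k i k = 0 := by simp [sWH]
    rw [← e1, ← Finset.add_sum_erase _ _ (Finset.mem_univ k), e2, zero_add]
    have := Finset.card_nsmul_le_sum (Finset.univ.erase k) (fun j => sWH W H k i j) q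
      (fun j hj => hle k i j (Finset.ne_of_mem_erase hj))
    rw [Finset.card_erase_of_mem (Finset.mem_univ k), nsmul_eq_mul] at this
    simpa [Nat.cast_sub (show 1 ≤ K by omega)] using this
  have h2 : ∀ k i, 2 * s * (((K : ℝ) - 1) * q) ≤ K * (‖W k - m‖ ^ 2 + n * ‖H k i‖ ^ 2) := by
    intro k i
    have a := real_inner_le_norm (W k - m) (H k i)
    have b : 2 * s * ⟪W k - m, H k i⟫ ≤ ‖W k - m‖ ^ 2 + n * ‖H k i‖ ^ 2 := by
      rw [← hs2]
      nlinarith [sq_nonneg (‖W k - m‖ - s * ‖H k i‖), mul_le_mul_of_nonneg_left a hs0.le]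
    have c := mul_le_mul_of_nonneg_left (h1 k i) (show 0 ≤ 2 * s by linarith)
    have e := mul_le_mul_of_nonneg_left b (show (0 : ℝ) ≤ K by linarith)
    linarith
  have h3 : ∑ k, ‖W k - m‖ ^ 2 ≤ WF2 W := by
    simp only [norm_sub_sq_real, Finset.sum_add_distrib, Finset.sum_sub_distrib,
      ← Finset.mul_sum, ← sum_inner, hmS, real_inner_smul_left, real_inner_self_eq_norm_sq, WF2]
    simp
    nlinarith [mul_nonneg (show (0 : ℝ) ≤ K by linarith) (sq_nonneg ‖m‖)]
  have h4 := Finset.sum_le_sum (s := Finset.univ) fun k _ =>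
    Finset.sum_le_sum (s := Finset.univ) fun i _ => h2 k i
  simp only [← Finset.mul_sum, Finset.sum_add_distrib, Finset.sum_const, Finset.card_univ,
    Fintype.card_fin, nsmul_eq_mul] at h4
  have h5 : HF2 H = ∑ k, ∑ i, ‖H k i‖ ^ 2 := rfl
  rw [← h5, ← mul_add] at h4
  have h4' : (K : ℝ) * (n * (2 * s * ((K - 1) * q))) ≤
      K * (n * (∑ i, ‖W i - m‖ ^ 2 + HF2 H)) := by linarith
  have h6 := le_of_mul_le_mul_left h4' (by linarith : (0 : ℝ) < K)
  have h7 := le_of_mul_le_mul_left h6 (by linarith : (0 : ℝ) < n)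
  rw [le_div_iff₀ (by have : 0 < (K : ℝ) - 1 := by linarith
                      positivity)]
  linarith
end

section
/- Equality q_min(W,H) = (‖W‖_F² + ‖H‖_F²)/(2(K−1)√n) holds if and only if all of the following hold: (a) Σ_{k=1}^K w_k = 0; (b) w_k = √n · h_{k,i} for every k ∈ [K] and i ∈ [n]; (c) ‖w_k‖² = (‖W‖_F² + ‖H‖_F²)/(2K) for every k; (d) ⟨w_k, w_j⟩ = −(‖W‖_F² + ‖H‖_F²)/(2K(K−1)) for every k ≠ j. In particular, at equality ‖W‖_F = ‖H‖_F. -/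
open scoped BigOperators RealInnerProductSpace
open Finset

lemma aux_qmin_le {K n d : ℕ} (W : Fin K → EuclideanSpace ℝ (Fin d))
    (H : Fin K → Fin n → EuclideanSpace ℝ (Fin d)) (k : Fin K) (i : Fin n) (j : Fin K)
    (h : j ≠ k) : qmin W H ≤ sWH W H k i j := by
  apply csInf_le
  · have : {x : ℝ | ∃ k i j, j ≠ k ∧ x = sWH W H k i j} ⊆
        Set.range (fun p : Fin K × Fin n × Fin K => sWH W H p.1 p.2.1 p.2.2) := by
      rintro x ⟨k, i, j, _, rfl⟩
      exact ⟨(k, i, j), rfl⟩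
    exact ((Set.finite_range _).subset this).bddBelow
  · exact ⟨k, i, j, h, rfl⟩

lemma aux_sum_s {K n d : ℕ} (W : Fin K → EuclideanSpace ℝ (Fin d))
    (H : Fin K → Fin n → EuclideanSpace ℝ (Fin d)) (hK : (K : ℝ) ≠ 0) (r : ℝ)
    (k : Fin K) (i : Fin n) :
    2 * r * ∑ j, sWH W H k i j = K * (‖W k - (K : ℝ)⁻¹ • ∑ j, W j‖ ^ 2 + r ^ 2 * ‖H k i‖ ^ 2
      - ‖(W k - (K : ℝ)⁻¹ • ∑ j, W j) - r • H k i‖ ^ 2) := by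
  have h1 : ∑ j, sWH W H k i j = K * ⟪W k - (K : ℝ)⁻¹ • ∑ j, W j, H k i⟫ := by
    simp only [sWH, inner_sub_left, Finset.sum_sub_distrib, ← sum_inner, inner_smul_left]
    simp
    field_simp
    rw [← Nat.cast_smul_eq_nsmul ℝ, real_inner_smul_left]
  rw [h1, norm_sub_sq_real (W k - (K : ℝ)⁻¹ • ∑ j, W j), inner_smul_right, norm_smul, mul_pow]
  simp only [Real.norm_eq_abs, sq_abs]
  ring

lemma aux_sum_v {K d : ℕ} (W : Fin K → EuclideanSpace ℝ (Fin d)) (hK : (K : ℝ) ≠ 0) :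
    ∑ k, ‖W k - (K : ℝ)⁻¹ • ∑ j, W j‖ ^ 2 = WF2 W - (K : ℝ)⁻¹ * ‖∑ j, W j‖ ^ 2 := by
  simp only [norm_sub_sq_real, Finset.sum_add_distrib, Finset.sum_sub_distrib, ← Finset.mul_sum,
    ← sum_inner, inner_smul_right, norm_smul, mul_pow, WF2, real_inner_self_eq_norm_sq]
  simp
  field_simp
  ring

lemma aux_zero {ι : Type*} [Fintype ι] (f : ι → ℝ) (h0 : ∀ i, 0 ≤ f i) (h : ∑ i, f i = 0)
    (i : ι) : f i = 0 :=
  (Finset.sum_eq_zero_iff_of_nonneg (fun k _ => h0 k)).1 h i (mem_univ _)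

lemma aux_total {K n d : ℕ} (W : Fin K → EuclideanSpace ℝ (Fin d))
    (H : Fin K → Fin n → EuclideanSpace ℝ (Fin d)) (hK : (K : ℝ) ≠ 0) (r q : ℝ)
    (hr : r ^ 2 = n) :
    2 * r * ∑ k, ∑ i, ∑ j, (if j = k then 0 else sWH W H k i j - q)
      + n * ‖∑ j, W j‖ ^ 2 + K * ∑ k, ∑ i, ‖(W k - (K : ℝ)⁻¹ • ∑ j, W j) - r • H k i‖ ^ 2
      = K * n * (WF2 W + HF2 H) - 2 * r * (K * n * (K - 1) * q) := by
  have h1 : ∀ k i, 2 * r * ∑ j, (if j = k then 0 else sWH W H k i j - q)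
      = K * (‖W k - (K : ℝ)⁻¹ • ∑ j, W j‖ ^ 2 + r ^ 2 * ‖H k i‖ ^ 2
      - ‖(W k - (K : ℝ)⁻¹ • ∑ j, W j) - r • H k i‖ ^ 2) - 2 * r * ((K - 1) * q) := by
    intro k i
    rw [← aux_sum_s W H hK]
    have : ∀ j, (if j = k then 0 else sWH W H k i j - q)
        = sWH W H k i j - q + (if j = k then q else 0) := by
      intro j
      split_ifs with h
      · subst h; simp [sWH]
      · ring
    simp only [this, Finset.sum_add_distrib, Finset.sum_sub_distrib]
    simp
    ring
  have h2 : 2 * r * ∑ k, ∑ i, ∑ j, (if j = k then 0 else sWH W H k i j - q)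
      = ∑ k, ∑ i, 2 * r * ∑ j, (if j = k then 0 else sWH W H k i j - q) := by
    simp only [Finset.mul_sum]
  rw [h2]
  simp only [h1, Finset.sum_sub_distrib, ← Finset.mul_sum, Finset.sum_add_distrib]
  simp only [Finset.sum_const, Finset.card_univ, Fintype.card_fin, nsmul_eq_mul, ← Finset.mul_sum,
    aux_sum_v W hK, hr]
  unfold HF2
  field_simp
  ring

theorem margin_equality_iff {K n d : ℕ} (hK : 2 ≤ K) (hn : 1 ≤ n) (hd : 1 ≤ d)
    (W : Fin K → EuclideanSpace ℝ (Fin d)) (H : Fin K → Fin n → EuclideanSpace ℝ (Fin d)) :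
    (qmin W H = (WF2 W + HF2 H) / (2 * ((K : ℝ) - 1) * Real.sqrt n) ↔
      ((∑ k, W k = 0) ∧
       (∀ k i, W k = Real.sqrt n • H k i) ∧
       (∀ k, ‖W k‖ ^ 2 = (WF2 W + HF2 H) / (2 * (K : ℝ))) ∧
       (∀ k j, k ≠ j → ⟪W k, W j⟫ = -((WF2 W + HF2 H) / (2 * (K : ℝ) * ((K : ℝ) - 1))))))
    ∧
    (qmin W H = (WF2 W + HF2 H) / (2 * ((K : ℝ) - 1) * Real.sqrt n) →
      Real.sqrt (WF2 W) = Real.sqrt (HF2 H)) := by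
  have hK2 : (2 : ℝ) ≤ K := by exact_mod_cast hK
  have hn1 : (1 : ℝ) ≤ n := by exact_mod_cast hn
  have hK0 : (K : ℝ) ≠ 0 := by linarith
  have hK1 : (K : ℝ) - 1 ≠ 0 := by linarith
  obtain ⟨r, hr⟩ : ∃ r, r = Real.sqrt n := ⟨_, rfl⟩
  have hr0 : 0 < r := by rw [hr]; exact Real.sqrt_pos.2 (by linarith)
  have hr2 : r ^ 2 = n := by rw [hr]; exact Real.sq_sqrt (by linarith)
  rw [← hr]
  have fwd : qmin W H = (WF2 W + HF2 H) / (2 * ((K : ℝ) - 1) * r) →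
      ((∑ k, W k = 0) ∧
       (∀ k i, W k = r • H k i) ∧
       (∀ k, ‖W k‖ ^ 2 = (WF2 W + HF2 H) / (2 * (K : ℝ))) ∧
       (∀ k j, k ≠ j → ⟪W k, W j⟫ = -((WF2 W + HF2 H) / (2 * (K : ℝ) * ((K : ℝ) - 1))))) := by
    intro hq
    have ht := aux_total W H hK0 r (qmin W H) hr2
    have hz : K * n * (WF2 W + HF2 H) - 2 * r * (K * n * (K - 1) * qmin W H) = 0 := by
      rw [hq]; field_simp; ring
    rw [hz] at ht
    have p1 : ∀ k i j, 0 ≤ (if j = k then 0 else sWH W H k i j - qmin W H) := by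
      intro k i j
      split_ifs with h
      · exact le_rfl
      · exact sub_nonneg.2 (aux_qmin_le W H k i j h)
    have p1' : 0 ≤ ∑ k, ∑ i, ∑ j, (if j = k then 0 else sWH W H k i j - qmin W H) :=
      Finset.sum_nonneg fun k _ => Finset.sum_nonneg fun i _ => Finset.sum_nonneg fun j _ =>
        p1 k i j
    have p3' : 0 ≤ ∑ k, ∑ i, ‖(W k - (K : ℝ)⁻¹ • ∑ j, W j) - r • H k i‖ ^ 2 := by positivity
    have a1 := mul_nonneg (by positivity : 0 ≤ 2 * r) p1'
    have a2 : 0 ≤ n * ‖∑ j, W j‖ ^ 2 := by positivity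
    have a3 := mul_nonneg (by positivity : 0 ≤ (K : ℝ)) p3'
    have z1 := (mul_eq_zero.1 (by linarith : 2 * r * ∑ k, ∑ i, ∑ j,
      (if j = k then 0 else sWH W H k i j - qmin W H) = 0)).resolve_left (by positivity)
    have z2 := (mul_eq_zero.1 (by linarith : n * ‖∑ j, W j‖ ^ 2 = 0)).resolve_left (by positivity)
    have z3 := (mul_eq_zero.1 (by linarith : K * ∑ k, ∑ i,
      ‖(W k - (K : ℝ)⁻¹ • ∑ j, W j) - r • H k i‖ ^ 2 = 0)).resolve_left hK0
    have m0 : ∑ j, W j = 0 := by simpa using z2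
    have b : ∀ k i, W k = r • H k i := by
      intro k i
      have e1 := aux_zero _ (fun k => Finset.sum_nonneg fun i _ => sq_nonneg _) z3 k
      have e2 := aux_zero _ (fun i => sq_nonneg _) e1 i
      rw [m0] at e2
      simpa [sub_eq_zero] using e2
    have s : ∀ k i j, j ≠ k → sWH W H k i j = qmin W H := by
      intro k i j hj
      have e1 := aux_zero _ (fun k => Finset.sum_nonneg fun i _ =>
        Finset.sum_nonneg fun j _ => p1 k i j) z1 k
      have e2 := aux_zero _ (fun i => Finset.sum_nonneg fun j _ => p1 k i j) e1 i
      have e3 := aux_zero _ (fun j => p1 k i j) e2 j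
      rw [if_neg hj] at e3
      linarith
    have i0 : Fin n := ⟨0, by omega⟩
    have s' : ∀ k j, j ≠ k → ‖W k‖ ^ 2 - ⟪W j, W k⟫ = (WF2 W + HF2 H) / (2 * ((K : ℝ) - 1)) := by
      intro k j hj
      rw [← real_inner_self_eq_norm_sq, ← inner_sub_left]
      have e : ⟪W k - W j, W k⟫ = r * sWH W H k i0 j := by
        unfold sWH
        rw [← inner_smul_right, ← b k i0]
      rw [e, s k i0 j hj, hq]
      field_simp
    have c : ∀ k, ‖W k‖ ^ 2 = (WF2 W + HF2 H) / (2 * (K : ℝ)) := by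
      intro k
      have e1 : ∑ j, (‖W k‖ ^ 2 - ⟪W j, W k⟫) = K * ‖W k‖ ^ 2 := by
        rw [Finset.sum_sub_distrib, ← sum_inner, m0]; simp
      have e2 : ∑ j, (‖W k‖ ^ 2 - ⟪W j, W k⟫)
          = ∑ j, ((WF2 W + HF2 H) / (2 * ((K : ℝ) - 1))
            - if j = k then (WF2 W + HF2 H) / (2 * ((K : ℝ) - 1)) else 0) := by
        apply Finset.sum_congr rfl
        intro j _
        split_ifs with h
        · subst h; rw [real_inner_self_eq_norm_sq]; ring
        · rw [s' k j h]; ring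
      rw [e1, Finset.sum_sub_distrib] at e2
      simp only [Finset.sum_const, Finset.card_univ, Fintype.card_fin, nsmul_eq_mul,
        Finset.sum_ite_eq', mem_univ, if_true] at e2
      field_simp at e2 ⊢
      linarith
    refine ⟨m0, b, c, ?_⟩
    intro k j hkj
    have e := s' j k hkj
    rw [c j] at e
    have : ⟪W k, W j⟫ = (WF2 W + HF2 H) / (2 * (K : ℝ)) -
      (WF2 W + HF2 H) / (2 * ((K : ℝ) - 1)) := by linarith
    rw [this]
    field_simp
    ring
  refine ⟨⟨fwd, ?_⟩, ?_⟩
  · rintro ⟨-, b, c, e⟩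
    have s : ∀ k i j, j ≠ k → sWH W H k i j = (WF2 W + HF2 H) / (2 * ((K : ℝ) - 1) * r) := by
      intro k i j hj
      have h1 : r * sWH W H k i j = ‖W k‖ ^ 2 - ⟪W j, W k⟫ := by
        unfold sWH
        rw [← inner_smul_right, ← b k i, inner_sub_left, real_inner_self_eq_norm_sq]
      rw [c k, e j k hj] at h1
      have h2 : sWH W H k i j = (r * sWH W H k i j) / r := by field_simp
      rw [h2, h1]
      field_simp
      ring
    have hs : {x : ℝ | ∃ k i j, j ≠ k ∧ x = sWH W H k i j}
        = {(WF2 W + HF2 H) / (2 * ((K : ℝ) - 1) * r)} := by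
      ext x
      constructor
      · rintro ⟨k, i, j, hj, rfl⟩
        exact s k i j hj
      · intro hx
        have hx' : x = _ := hx
        refine ⟨⟨0, by omega⟩, ⟨0, by omega⟩, ⟨1, by omega⟩, by simp, ?_⟩
        rw [s _ _ _ (by simp)]
        exact hx'
    unfold qmin
    rw [hs, csInf_singleton]
  · intro hq
    obtain ⟨-, b, -, -⟩ := fwd hq
    congr 1
    unfold WF2 HF2
    apply Finset.sum_congr rfl
    intro k _
    have : ∀ i, ‖H k i‖ ^ 2 = ‖W k‖ ^ 2 / n := by
      intro i
      rw [b k i, norm_smul, mul_pow, Real.norm_eq_abs, sq_abs, hr2]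
      field_simp
    simp only [this]
    simp
    field_simp
end

section
/- Assume d ≥ K−1. Every feasible point of the minimum-norm separation problem, i.e. every (W,H) with s_{k,i,j}(W,H) ≥ 1 for all k ∈ [K], i ∈ [n], j ≠ k, satisfies ‖W‖_F² + ‖H‖_F² ≥ 2(K−1)√n, and this lower bound is attained by some feasible point. Moreover, every global minimizer (a feasible point whose value of ‖W‖_F² + ‖H‖_F² is minimal among all feasible points) satisfies the neural collapse conditions with ‖W‖_F = ‖H‖_F. -/
open scoped BigOperators RealInnerProductSpace
open Finset

/-- The neural collapse conditions (NC-a)–(NC-d). -/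
def NeuralCollapse {K n d : ℕ} (W : Fin K → EuclideanSpace ℝ (Fin d))
    (H : Fin K → Fin n → EuclideanSpace ℝ (Fin d)) : Prop :=
  -- (NC-a) variability collapse
  (∀ k i i', H k i = H k i') ∧
  -- (NC-b)
  (∑ k, W k) = 0 ∧ (∀ k k', ‖W k‖ = ‖W k'‖) ∧
  (∀ k k' i i', ‖H k i‖ = ‖H k' i'‖) ∧ (∀ k i, H k i ≠ 0) ∧
  -- (NC-c)
  (∀ k j, k ≠ j → ∀ i i', ⟪H k i, H j i'⟫ = -(‖H k i‖ * ‖H j i'‖) / ((K : ℝ) - 1)) ∧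
  -- (NC-d)
  (∃ C : ℝ, 0 < C ∧ ∀ k i, W k = C • H k i)

/-- Feasibility for the minimum-norm separation problem. -/
def Feasible {K n d : ℕ} (W : Fin K → EuclideanSpace ℝ (Fin d))
    (H : Fin K → Fin n → EuclideanSpace ℝ (Fin d)) : Prop :=
  ∀ k i j, j ≠ k → 1 ≤ sWH W H k i j

lemma nc_key {K n d : ℕ} (hK : 2 ≤ K) (hn : 1 ≤ n)
    (W : Fin K → EuclideanSpace ℝ (Fin d)) (H : Fin K → Fin n → EuclideanSpace ℝ (Fin d)) :
    WF2 W + HF2 H = 2 * ((K : ℝ) - 1) * Real.sqrt n + (1 / (K : ℝ)) * ‖∑ k, W k‖ ^ 2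
      + ∑ k, ∑ i, ‖(1 / Real.sqrt n) • (W k - (1 / (K : ℝ)) • ∑ k, W k) - H k i‖ ^ 2
      + (2 / (Real.sqrt n * K)) *
          ∑ k, ∑ i, ∑ j, (sWH W H k i j - if j = k then 0 else 1) := by
  have hK0 : (K : ℝ) ≠ 0 := by positivity
  have hn0 : (0 : ℝ) < n := by exact_mod_cast hn
  set r := Real.sqrt n with hr
  have hr0 : 0 < r := Real.sqrt_pos.mpr hn0
  have hrr : (n : ℝ) = r ^ 2 := (Real.sq_sqrt hn0.le).symm
  set S := ∑ k, W k with hS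
  set v : Fin K → EuclideanSpace ℝ (Fin d) := fun k => W k - (1 / (K : ℝ)) • S with hv
  have hA : ∑ k, ‖v k‖ ^ 2 = WF2 W - (1 / (K : ℝ)) * ‖S‖ ^ 2 := by
    have h1 : ∀ k, ‖v k‖ ^ 2 = ‖W k‖ ^ 2 - 2 * (1 / (K : ℝ)) * ⟪W k, S⟫
        + (1 / (K : ℝ)) ^ 2 * ‖S‖ ^ 2 := by
      intro k
      simp only [hv]
      rw [norm_sub_sq_real, inner_smul_right, norm_smul, mul_pow, Real.norm_eq_abs, sq_abs]
      ring
    simp only [h1, Finset.sum_add_distrib, Finset.sum_sub_distrib, ← Finset.mul_sum, ← sum_inner]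
    rw [← hS, real_inner_self_eq_norm_sq]
    simp only [WF2, Finset.sum_const, Finset.card_univ, Fintype.card_fin, nsmul_eq_mul]
    field_simp
    ring
  have hB : ∀ k i, ∑ j, sWH W H k i j = K * ⟪v k, H k i⟫ := by
    intro k i
    simp only [sWH, ← sum_inner, Finset.sum_sub_distrib, Finset.sum_const, Finset.card_univ,
      Fintype.card_fin, hv, ← hS]
    rw [inner_sub_left, inner_sub_left, inner_smul_left, ← Nat.cast_smul_eq_nsmul ℝ,
      inner_smul_left]
    simp
    field_simp
  have hC : ∀ k : Fin K, ∑ j : Fin K, (if j = k then (0 : ℝ) else 1) = K - 1 := by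
    intro k
    have : ∀ j : Fin K, (if j = k then (0 : ℝ) else 1) = 1 - if j = k then 1 else 0 := by
      intro j; split_ifs <;> norm_num
    simp [this, Finset.sum_sub_distrib]
  have hD : ∀ k i, ‖(1 / r) • v k - H k i‖ ^ 2
      = (1 / r ^ 2) * ‖v k‖ ^ 2 - (2 / r) * ⟪v k, H k i⟫ + ‖H k i‖ ^ 2 := by
    intro k i
    rw [norm_sub_sq_real, inner_smul_left, norm_smul, mul_pow, Real.norm_eq_abs, sq_abs]
    simp
    ring
  have hD' : ∑ k, ∑ i, ‖(1 / r) • v k - H k i‖ ^ 2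
      = ∑ k, ‖v k‖ ^ 2 - (2 / r) * (∑ k, ∑ i, ⟪v k, H k i⟫) + HF2 H := by
    simp only [hD, Finset.sum_add_distrib, Finset.sum_sub_distrib, ← Finset.mul_sum, HF2,
      Finset.sum_const, Finset.card_univ, Fintype.card_fin, nsmul_eq_mul]
    rw [hrr]
    field_simp
  have hE : ∑ k, ∑ i, ∑ j, (sWH W H k i j - if j = k then 0 else 1)
      = K * (∑ k, ∑ i, ⟪v k, H k i⟫) - K * (n * (K - 1)) := by
    simp only [Finset.sum_sub_distrib, hB, hC, ← Finset.mul_sum,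
      Finset.sum_const, Finset.card_univ, Fintype.card_fin, nsmul_eq_mul]
    ring
  change _ = _ + _ + ∑ k, ∑ i, ‖(1 / r) • v k - H k i‖ ^ 2 + _
  rw [hD', hE, hA, hrr]
  field_simp
  ring

lemma nc_simplex {K d : ℕ} (hK : 2 ≤ K) (hd : K - 1 ≤ d) :
    ∃ u : Fin K → EuclideanSpace ℝ (Fin d),
      ∀ j k, ⟪u j, u k⟫ = (if j = k then (1 : ℝ) else 0) - 1 / K := by
  have hK0 : (K : ℝ) ≠ 0 := by positivity
  let o : EuclideanSpace ℝ (Fin K) := WithLp.toLp 2 (fun _ => 1)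
  have ho : o ≠ 0 := by
    intro h
    have := congrArg (fun x : EuclideanSpace ℝ (Fin K) => x ⟨0, by omega⟩) h
    simp [o] at this
  have hoo : ⟪o, o⟫ = (K : ℝ) := by
    rw [PiLp.inner_apply]; simp [o]
  let e : Fin K → EuclideanSpace ℝ (Fin K) := fun k => EuclideanSpace.single k 1
  have hoe : ∀ k, ⟪o, e k⟫ = (1 : ℝ) := by
    intro k; simp [o, e, EuclideanSpace.inner_single_right]
  have heo : ∀ k, ⟪e k, o⟫ = (1 : ℝ) := by
    intro k; rw [real_inner_comm]; exact hoe k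
  have hee : ∀ j k, ⟪e j, e k⟫ = if j = k then (1 : ℝ) else 0 := by
    intro j k
    simp [e, EuclideanSpace.inner_single_right, Pi.single_apply, eq_comm]
  haveI : Fact (Module.finrank ℝ (EuclideanSpace ℝ (Fin K)) = (K - 1) + 1) :=
    ⟨by simp; omega⟩
  let V := (ℝ ∙ o)ᗮ
  have hV : Module.finrank ℝ V = K - 1 := Submodule.finrank_orthogonal_span_singleton ho
  let b : OrthonormalBasis (Fin (K - 1)) ℝ V := (stdOrthonormalBasis ℝ V).reindex (finCongr hV)
  let g : Fin (K - 1) → EuclideanSpace ℝ (Fin d) := fun i => EuclideanSpace.single (Fin.castLE hd i) 1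
  have hg : Orthonormal ℝ g := by
    have := (EuclideanSpace.basisFun (Fin d) ℝ).orthonormal.comp _ (Fin.castLE_injective hd)
    have hgg : g = (EuclideanSpace.basisFun (Fin d) ℝ) ∘ Fin.castLE hd := by
      funext i; simp [g]
    rw [hgg]; exact this
  let f : V →ₗ[ℝ] EuclideanSpace ℝ (Fin d) := b.toBasis.constr ℝ g
  have hf : f ∘ b.toBasis = g := by
    ext1 i; simp only [f, Function.comp]; exact b.toBasis.constr_basis ℝ g i
  let L : V →ₗᵢ[ℝ] EuclideanSpace ℝ (Fin d) :=
    f.isometryOfOrthonormal (v := b.toBasis) (by simpa using b.orthonormal) (by rw [hf]; exact hg)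
  let u : Fin K → V := fun k => ⟨e k - (1 / (K : ℝ)) • o, by
    rw [Submodule.mem_orthogonal_singleton_iff_inner_right, inner_sub_right, inner_smul_right,
      hoe, hoo]
    field_simp
    simp⟩
  refine ⟨fun k => L (u k), fun j k => ?_⟩
  rw [L.inner_map_map, Submodule.coe_inner]
  simp only [u, inner_sub_left, inner_sub_right, inner_smul_left, inner_smul_right, hee, heo,
    hoe, hoo]
  simp only [conj_trivial]
  field_simp
  ring

lemma nc_exists {K n d : ℕ} (hK : 2 ≤ K) (hn : 1 ≤ n) (hd : K - 1 ≤ d) :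
    ∃ (W : Fin K → EuclideanSpace ℝ (Fin d)) (H : Fin K → Fin n → EuclideanSpace ℝ (Fin d)),
        Feasible W H ∧ WF2 W + HF2 H = 2 * ((K : ℝ) - 1) * Real.sqrt n := by
  have hK0 : (K : ℝ) ≠ 0 := by positivity
  have hn0 : (0 : ℝ) < n := by exact_mod_cast hn
  obtain ⟨u, hu⟩ := nc_simplex hK hd
  set r := Real.sqrt n with hr
  have hr0 : 0 < r := Real.sqrt_pos.mpr hn0
  have hrr : (n : ℝ) = r ^ 2 := (Real.sq_sqrt hn0.le).symm
  set q := Real.sqrt r with hq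
  have hq0 : 0 < q := Real.sqrt_pos.mpr hr0
  have hqq : r = q ^ 2 := (Real.sq_sqrt hr0.le).symm
  have hun : ∀ k, ‖u k‖ ^ 2 = 1 - 1 / (K : ℝ) := by
    intro k; rw [← real_inner_self_eq_norm_sq, hu]; simp
  refine ⟨fun k => q • u k, fun k _ => (1 / q) • u k, ?_, ?_⟩
  · intro k i j hj
    simp only [sWH]
    rw [inner_smul_right, inner_sub_left, inner_smul_left, inner_smul_left, hu, hu, if_neg hj]
    simp
    field_simp
    linarith
  · simp only [WF2, HF2, norm_smul, mul_pow, Real.norm_eq_abs, sq_abs, hun, Finset.sum_const,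
      Finset.card_univ, Fintype.card_fin, nsmul_eq_mul]
    rw [hrr, hqq]
    field_simp
    ring

lemma nc_nonneg {K n d : ℕ} {W : Fin K → EuclideanSpace ℝ (Fin d)}
    {H : Fin K → Fin n → EuclideanSpace ℝ (Fin d)} (hF : Feasible W H) (k : Fin K) (i : Fin n)
    (j : Fin K) : 0 ≤ sWH W H k i j - if j = k then 0 else 1 := by
  split_ifs with h
  · subst h; simp [sWH]
  · have := hF k i j h; linarith

theorem minimum_norm_separation_global_optimum {K n d : ℕ}
    (hK : 2 ≤ K) (hn : 1 ≤ n) (hd : K - 1 ≤ d) :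
    (∀ (W : Fin K → EuclideanSpace ℝ (Fin d)) (H : Fin K → Fin n → EuclideanSpace ℝ (Fin d)),
        Feasible W H → 2 * ((K : ℝ) - 1) * Real.sqrt n ≤ WF2 W + HF2 H) ∧
    (∃ (W : Fin K → EuclideanSpace ℝ (Fin d)) (H : Fin K → Fin n → EuclideanSpace ℝ (Fin d)),
        Feasible W H ∧ WF2 W + HF2 H = 2 * ((K : ℝ) - 1) * Real.sqrt n) ∧
    (∀ (W : Fin K → EuclideanSpace ℝ (Fin d)) (H : Fin K → Fin n → EuclideanSpace ℝ (Fin d)),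
        Feasible W H →
        (∀ (W' : Fin K → EuclideanSpace ℝ (Fin d)) (H' : Fin K → Fin n → EuclideanSpace ℝ (Fin d)),
            Feasible W' H' → WF2 W + HF2 H ≤ WF2 W' + HF2 H') →
        NeuralCollapse W H ∧ Real.sqrt (WF2 W) = Real.sqrt (HF2 H)) := by
  have hK0 : (0 : ℝ) < K := by positivity
  have hK1 : (0 : ℝ) < (K : ℝ) - 1 := by
    have : (2 : ℝ) ≤ K := by exact_mod_cast hK
    linarith
  have hn0 : (0 : ℝ) < n := by exact_mod_cast hn
  have hr0 : 0 < Real.sqrt n := Real.sqrt_pos.mpr hn0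
  have hrr : (n : ℝ) = Real.sqrt n ^ 2 := (Real.sq_sqrt hn0.le).symm
  have hT : ∀ (W : Fin K → EuclideanSpace ℝ (Fin d)) (H : Fin K → Fin n → EuclideanSpace ℝ (Fin d)),
      Feasible W H → 0 ≤ ∑ k, ∑ i, ∑ j, (sWH W H k i j - if j = k then 0 else 1) := by
    intro W H hF
    exact Finset.sum_nonneg fun k _ => Finset.sum_nonneg fun i _ => Finset.sum_nonneg fun j _ =>
      nc_nonneg hF k i j
  refine ⟨?_, nc_exists hK hn hd, ?_⟩
  · intro W H hF
    rw [nc_key hK hn W H]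
    have h1 : 0 ≤ (1 / (K : ℝ)) * ‖∑ k, W k‖ ^ 2 := by positivity
    have h2 : 0 ≤ ∑ k, ∑ i,
        ‖(1 / Real.sqrt n) • (W k - (1 / (K : ℝ)) • ∑ k, W k) - H k i‖ ^ 2 := by positivity
    have h3 := mul_nonneg (by positivity : 0 ≤ 2 / (Real.sqrt n * K)) (hT W H hF)
    linarith
  · intro W H hF hmin
    obtain ⟨W', H', hF', hv'⟩ := nc_exists (n := n) hK hn hd
    have hle := hmin W' H' hF'
    rw [hv', nc_key hK hn W H] at hle
    have h1 : 0 ≤ (1 / (K : ℝ)) * ‖∑ k, W k‖ ^ 2 := by positivity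
    have h2 : 0 ≤ ∑ k, ∑ i,
        ‖(1 / Real.sqrt n) • (W k - (1 / (K : ℝ)) • ∑ k, W k) - H k i‖ ^ 2 := by positivity
    have hc : 0 < 2 / (Real.sqrt n * K) := by positivity
    have h3 := mul_nonneg hc.le (hT W H hF)
    have e1 : (1 / (K : ℝ)) * ‖∑ k, W k‖ ^ 2 = 0 := by linarith
    have e2 : ∑ k, ∑ i,
        ‖(1 / Real.sqrt n) • (W k - (1 / (K : ℝ)) • ∑ k, W k) - H k i‖ ^ 2 = 0 := by linarith
    have e3 : (2 / (Real.sqrt n * K)) *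
        ∑ k, ∑ i, ∑ j, (sWH W H k i j - if j = k then 0 else 1) = 0 := by linarith
    have hS : ∑ k, W k = 0 := by
      have := (mul_eq_zero.mp e1).resolve_left (by positivity)
      simpa using this
    have hH : ∀ k i, H k i = (1 / Real.sqrt n) • W k := by
      intro k i
      have a := (Finset.sum_eq_zero_iff_of_nonneg (fun k _ => by positivity)).mp e2 k (mem_univ _)
      have b := (Finset.sum_eq_zero_iff_of_nonneg (fun k _ => by positivity)).mp a i (mem_univ _)
      rw [hS, smul_zero, sub_zero] at b
      have b' := pow_eq_zero_iff (two_ne_zero) |>.mp b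
      exact (sub_eq_zero.mp (norm_eq_zero.mp b')).symm
    have hs : ∀ k i j, j ≠ k → sWH W H k i j = 1 := by
      intro k i j hj
      have e3' := (mul_eq_zero.mp e3).resolve_left hc.ne'
      have a := (Finset.sum_eq_zero_iff_of_nonneg (fun k _ => Finset.sum_nonneg fun i _ =>
        Finset.sum_nonneg fun j _ => nc_nonneg hF k i j)).mp e3' k (mem_univ _)
      have b := (Finset.sum_eq_zero_iff_of_nonneg (fun i _ =>
        Finset.sum_nonneg fun j _ => nc_nonneg hF k i j)).mp a i (mem_univ _)
      have c := (Finset.sum_eq_zero_iff_of_nonneg (fun j _ => nc_nonneg hF k i j)).mp b j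
        (mem_univ _)
      rw [if_neg hj] at c
      linarith
    let i0 : Fin n := ⟨0, hn⟩
    have hw : ∀ k j, j ≠ k → ⟪W j, W k⟫ = ‖W k‖ ^ 2 - Real.sqrt n := by
      intro k j hj
      have := hs k i0 j hj
      rw [sWH, hH, inner_smul_right, inner_sub_left, real_inner_self_eq_norm_sq] at this
      field_simp at this
      linarith
    have hnorm : ∀ k, ‖W k‖ ^ 2 = (K - 1) * Real.sqrt n / K := by
      intro k
      have h0 : ∑ j, ⟪W j, W k⟫ = 0 := by rw [← sum_inner, hS, inner_zero_left]
      have h1 : ∀ j, ⟪W j, W k⟫ = (‖W k‖ ^ 2 - Real.sqrt n) + if j = k then Real.sqrt n else 0 := by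
        intro j
        split_ifs with h
        · subst h; rw [real_inner_self_eq_norm_sq]; ring
        · rw [hw k j h]; ring
      simp only [h1, Finset.sum_add_distrib, Finset.sum_const, Finset.card_univ, Fintype.card_fin,
        nsmul_eq_mul, Finset.sum_ite_eq', Finset.mem_univ, if_true] at h0
      field_simp
      linarith
    have hnn : ∀ k k', ‖W k‖ = ‖W k'‖ := by
      intro k k'
      have : ‖W k‖ ^ 2 = ‖W k'‖ ^ 2 := by rw [hnorm, hnorm]
      exact (pow_left_inj₀ (norm_nonneg _) (norm_nonneg _) two_ne_zero).mp this
    have hW0 : ∀ k, W k ≠ 0 := by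
      intro k h
      have := hnorm k
      rw [h, norm_zero] at this
      have hp : 0 < ((K : ℝ) - 1) * Real.sqrt n / K := by positivity
      rw [← this] at hp
      norm_num at hp
    refine ⟨⟨?_, hS, hnn, ?_, ?_, ?_, Real.sqrt n, hr0, ?_⟩, ?_⟩
    · intro k i i'; rw [hH, hH]
    · intro k k' i i'; rw [hH, hH, norm_smul, norm_smul, hnn k k']
    · intro k i; rw [hH]; exact smul_ne_zero (by positivity) (hW0 k)
    · intro k j hkj i i'
      rw [hH, hH, inner_smul_left, inner_smul_right, hw j k hkj, norm_smul, norm_smul, hnn k j]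
      have : ‖(1 / Real.sqrt n)‖ = 1 / Real.sqrt n := by
        rw [Real.norm_eq_abs, abs_of_pos (by positivity)]
      have h2 : 1 / Real.sqrt n * ‖W j‖ * (1 / Real.sqrt n * ‖W j‖)
          = (1 / Real.sqrt n) ^ 2 * ‖W j‖ ^ 2 := by ring
      rw [this, h2, hnorm]
      simp only [conj_trivial]
      field_simp
      ring
    · intro k i; rw [hH, smul_smul, mul_one_div_cancel hr0.ne', one_smul]
    · congr 1
      simp only [WF2, HF2, hH, norm_smul, mul_pow, Real.norm_eq_abs, sq_abs, Finset.sum_const,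
        Finset.card_univ, Fintype.card_fin, nsmul_eq_mul]
      refine Finset.sum_congr rfl fun k _ => ?_
      rw [div_pow, ← hrr]
      field_simp
end

section
/- Suppose (W,H) satisfies the neural collapse conditions with w_k = √n·h̄_k for every k (equivalently, with ‖W‖_F = ‖H‖_F). Then (W,H) minimizes the cross-entropy loss on its sphere: L(W,H) ≤ L(W',H') for every (W',H') with ‖W'‖_F² + ‖H'‖_F² = ‖W‖_F² + ‖H‖_F². -/
open scoped BigOperators RealInnerProductSpace
open Finset

/-- Tangent-line (convexity) bound for the cross-entropy term. -/
lemma ce_tangent {ι : Type*} (F : Finset ι) (s : ι → ℝ) (s0 : ℝ) :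
    Real.log (1 + (F.card : ℝ) * Real.exp (-s0))
      - Real.exp (-s0) / (1 + (F.card : ℝ) * Real.exp (-s0)) * ((∑ j ∈ F, s j) - F.card * s0)
      ≤ Real.log (1 + ∑ j ∈ F, Real.exp (-(s j))) := by
  set m : ℝ := (F.card : ℝ) with hm
  have hm0 : 0 ≤ m := Nat.cast_nonneg _
  set e := Real.exp (-s0) with he
  have he0 : 0 < e := Real.exp_pos _
  have hA : 0 < 1 + m * e := by positivity
  set c := e / (1 + m * e) with hc
  set D := (∑ j ∈ F, s j) - m * s0 with hD
  set t := -(c * D) with ht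
  have hcA : c * (1 + m * e) = e := by rw [hc]; field_simp
  have hB : 0 < 1 + ∑ j ∈ F, Real.exp (-(s j)) := by
    have : 0 ≤ ∑ j ∈ F, Real.exp (-(s j)) := Finset.sum_nonneg fun j _ => (Real.exp_pos _).le
    linarith
  have het : 0 < Real.exp t := Real.exp_pos t
  have key : ∀ x : ℝ, Real.exp t * (1 + x - t) ≤ Real.exp x := by
    intro x
    have h := Real.add_one_le_exp (x - t)
    calc Real.exp t * (1 + x - t) ≤ Real.exp t * Real.exp (x - t) := by
          apply mul_le_mul_of_nonneg_left _ het.le; linarith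
      _ = Real.exp x := by rw [← Real.exp_add]; congr 1; ring
  have h1 : Real.exp t * (1 - t) ≤ 1 := by simpa using key 0
  have h2 : ∑ j ∈ F, e * (Real.exp t * (1 + (s0 - s j) - t)) ≤ ∑ j ∈ F, Real.exp (-(s j)) := by
    apply Finset.sum_le_sum
    intro j _
    calc e * (Real.exp t * (1 + (s0 - s j) - t)) ≤ e * Real.exp (s0 - s j) :=
          mul_le_mul_of_nonneg_left (key _) he0.le
      _ = _ := by rw [he, ← Real.exp_add]; congr 1; ring
  have h3 : ∑ j ∈ F, e * (Real.exp t * (1 + (s0 - s j) - t))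
      = e * Real.exp t * (m - D - m * t) := by
    rw [← Finset.mul_sum, ← Finset.mul_sum, Finset.sum_sub_distrib, Finset.sum_add_distrib,
      Finset.sum_sub_distrib]
    simp only [Finset.sum_const, nsmul_eq_mul, ← hm, hD]
    ring
  have h4 : (1 + m * e) * Real.exp t ≤ 1 + ∑ j ∈ F, Real.exp (-(s j)) := by
    have h5 : (1 + m * e) * Real.exp t
        = Real.exp t * (1 - t) + e * Real.exp t * (m - D - m * t) := by
      have : t * (1 + m * e) = - (e * D) := by rw [ht]; linear_combination (-D) * hcA
      linear_combination Real.exp t * this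
    linarith
  have h6 := Real.log_le_log (by positivity) h4
  rw [Real.log_mul hA.ne' het.ne', Real.log_exp] at h6
  linarith

lemma sum_margin_le {K n d : ℕ} (hK : 2 ≤ K) (hn : 1 ≤ n)
    (W : Fin K → EuclideanSpace ℝ (Fin d)) (H : Fin K → Fin n → EuclideanSpace ℝ (Fin d)) :
    ∑ k, ∑ i, ∑ j ∈ univ.filter (fun j => j ≠ k), sWH W H k i j
      ≤ K * Real.sqrt n / 2 * (WF2 W + HF2 H) := by
  have hK0 : (0:ℝ) < K := by exact_mod_cast (by omega : 0 < K)
  have hn0 : (0:ℝ) < n := by exact_mod_cast (by omega : 0 < n)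
  have hr : 0 < Real.sqrt n := Real.sqrt_pos.2 hn0
  have hrr : Real.sqrt n * Real.sqrt n = n := Real.mul_self_sqrt hn0.le
  set r := Real.sqrt n with hrdef
  set S := ∑ j, W j with hS
  have h1 : ∀ k i, ∑ j ∈ univ.filter (fun j => j ≠ k), sWH W H k i j
      = ⟪(K:ℝ) • W k - S, H k i⟫ := by
    intro k i
    have : ∑ j ∈ univ.filter (fun j => j ≠ k), sWH W H k i j = ∑ j, sWH W H k i j := by
      apply Finset.sum_subset (Finset.filter_subset _ _)
      intro j _ hj
      have : j = k := by simpa using hj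
      simp [sWH, this]
    rw [this]
    simp only [sWH]
    rw [← sum_inner, Finset.sum_sub_distrib]
    simp [hS, Nat.cast_smul_eq_nsmul]
  have h2 : ∀ x y : EuclideanSpace ℝ (Fin d),
      ⟪x, y⟫ ≤ ‖x‖^2 / (2 * K * r) + K * r / 2 * ‖y‖^2 := by
    intro x y
    have h := real_inner_le_norm x y
    have h' : ‖x‖^2 / (2 * K * r) + K * r / 2 * ‖y‖^2 - ‖x‖ * ‖y‖
        = (‖x‖ - K * r * ‖y‖)^2 / (2 * K * r) := by field_simp; ring
    have : 0 ≤ (‖x‖ - K * r * ‖y‖)^2 / (2 * K * r) := by positivity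
    linarith
  have h3 : ∑ k, ‖(K:ℝ) • W k - S‖^2 ≤ K^2 * WF2 W := by
    have e : ∀ k, ‖(K:ℝ) • W k - S‖^2 = K^2 * ‖W k‖^2 - 2 * K * ⟪W k, S⟫ + ‖S‖^2 := by
      intro k
      rw [norm_sub_sq_real, norm_smul, real_inner_smul_left, Real.norm_eq_abs, mul_pow, sq_abs]
      ring
    have e2 : ∑ k, ⟪W k, S⟫ = ‖S‖^2 := by
      rw [← sum_inner, ← hS, real_inner_self_eq_norm_sq]
    simp only [e]
    rw [Finset.sum_add_distrib, Finset.sum_sub_distrib, ← Finset.mul_sum, ← Finset.mul_sum, e2]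
    simp only [Finset.sum_const, Finset.card_univ, Fintype.card_fin, nsmul_eq_mul, WF2]
    have : 0 ≤ (K:ℝ) * ‖S‖^2 := by positivity
    linarith
  calc ∑ k, ∑ i, ∑ j ∈ univ.filter (fun j => j ≠ k), sWH W H k i j
      ≤ ∑ k, ∑ i, (‖(K:ℝ) • W k - S‖^2 / (2 * K * r) + K * r / 2 * ‖H k i‖^2) := by
        apply Finset.sum_le_sum; intro k _
        apply Finset.sum_le_sum; intro i _
        rw [h1]; exact h2 _ _
    _ = n * (∑ k, ‖(K:ℝ) • W k - S‖^2) / (2 * K * r) + K * r / 2 * HF2 H := by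
        simp only [Finset.sum_add_distrib, Finset.sum_const, Finset.card_univ, Fintype.card_fin,
          nsmul_eq_mul, ← Finset.mul_sum, HF2, ← Finset.sum_div]
        ring
    _ ≤ n * (K^2 * WF2 W) / (2 * K * r) + K * r / 2 * HF2 H := by gcongr
    _ = _ := by
        rw [← hrr]; field_simp

theorem neural_collapse_is_optimal_on_sphere {K n d : ℕ}
    (hK : 2 ≤ K) (hn : 1 ≤ n) (hd : 1 ≤ d)
    (W : Fin K → EuclideanSpace ℝ (Fin d)) (H : Fin K → Fin n → EuclideanSpace ℝ (Fin d))
    (hNC : NeuralCollapse W H) (hWH : ∀ k i, W k = Real.sqrt n • H k i) :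
    ∀ (W' : Fin K → EuclideanSpace ℝ (Fin d)) (H' : Fin K → Fin n → EuclideanSpace ℝ (Fin d)),
      WF2 W' + HF2 H' = WF2 W + HF2 H → LWH W H ≤ LWH W' H' := by
  intro W' H' hE
  have hK0 : (2:ℝ) ≤ K := by exact_mod_cast hK
  have hn0 : (0:ℝ) < n := by exact_mod_cast (by omega : 0 < n)
  have hrr : Real.sqrt n * Real.sqrt n = n := Real.mul_self_sqrt hn0.le
  have hr : 0 < Real.sqrt n := Real.sqrt_pos.2 hn0
  obtain ⟨-, -, -, hHn, -, hin, -⟩ := hNC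
  have hK1 : (K:ℝ) - 1 ≠ 0 := by linarith
  set q := ‖H ⟨0, by omega⟩ ⟨0, by omega⟩‖ with hq
  have hHq : ∀ k i, ‖H k i‖ = q := fun k i => hHn _ _ _ _
  set r := Real.sqrt n with hrdef
  have hWq : ∀ k, ‖W k‖ ^ 2 = n * q ^ 2 := by
    intro k
    rw [hWH k ⟨0, by omega⟩, norm_smul, hHq, Real.norm_eq_abs, mul_pow, sq_abs, sq r, hrr]
  set s0 := r * q ^ 2 * K / (K - 1) with hs0
  have hs : ∀ k i j, j ≠ k → sWH W H k i j = s0 := by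
    intro k i j hj
    rw [sWH, hWH k i, hWH j i, ← smul_sub, real_inner_smul_left, inner_sub_left,
      real_inner_self_eq_norm_sq, hin j k hj, hHq, hHq, hs0]
    field_simp
    ring
  have hcard : ∀ k : Fin K, ((univ.filter (fun j => j ≠ k)).card : ℝ) = K - 1 := by
    intro k
    rw [Finset.filter_ne', Finset.card_erase_of_mem (Finset.mem_univ k), Finset.card_univ,
      Fintype.card_fin, Nat.cast_sub (by omega)]
    simp
  have hEv : WF2 W + HF2 H = 2 * K * n * q ^ 2 := by
    simp only [WF2, HF2, hWq, hHq, Finset.sum_const, Finset.card_univ, Fintype.card_fin,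
      nsmul_eq_mul]
    ring
  have hL : LWH W H = K * (n * Real.log (1 + (K - 1) * Real.exp (-s0))) := by
    have e : ∀ (k : Fin K) (i : Fin n),
        ∑ j ∈ univ.filter (fun j => j ≠ k), Real.exp (-(sWH W H k i j))
          = (K - 1) * Real.exp (-s0) := by
      intro k i
      rw [← hcard k, ← nsmul_eq_mul]
      apply Finset.sum_eq_card_nsmul
      intro j hj
      rw [hs k i j (by simpa using hj)]
    simp only [LWH, e, Finset.sum_const, Finset.card_univ, Fintype.card_fin, nsmul_eq_mul]
  have hM := sum_margin_le hK hn W' H'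
  rw [hE, hEv, ← hrdef] at hM
  set c := Real.exp (-s0) / (1 + ((K:ℝ) - 1) * Real.exp (-s0)) with hc
  have hK1' : 0 ≤ (K:ℝ) - 1 := by linarith
  have hc0 : 0 ≤ c := by positivity
  have hlow : ∑ k, ∑ i, (Real.log (1 + ((K:ℝ) - 1) * Real.exp (-s0))
      - c * ((∑ j ∈ univ.filter (fun j => j ≠ k), sWH W' H' k i j) - (K - 1) * s0))
      ≤ LWH W' H' := by
    apply Finset.sum_le_sum; intro k _
    apply Finset.sum_le_sum; intro i _
    have := ce_tangent (univ.filter (fun j => j ≠ k)) (fun j => sWH W' H' k i j) s0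
    rw [hcard] at this
    exact this
  refine le_trans ?_ hlow
  rw [hL]
  simp only [Finset.sum_sub_distrib, ← Finset.mul_sum, Finset.sum_const, Finset.card_univ,
    Fintype.card_fin, nsmul_eq_mul]
  have hv : (K:ℝ) * (n * ((K - 1) * s0)) = K * r / 2 * (2 * K * n * q ^ 2) := by
    rw [hs0]; field_simp
  have := mul_le_mul_of_nonneg_left hM hc0
  rw [← hv] at this
  linarith
end

section
/- Assume d ≥ K−1, (W,H) ≠ (0,0), and L(W,H) ≤ L(W',H') for every (W',H') with ‖W'‖_F² + ‖H'‖_F² = ‖W‖_F² + ‖H‖_F². Then (W,H) satisfies the neural collapse conditions with w_k = √n·h̄_k for every k; in particular ‖W‖_F = ‖H‖_F. -/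
open scoped BigOperators RealInnerProductSpace
open Finset

lemma nc_key_s4 {ι : Type*} (F : Finset ι) (c : ℝ) (s : ι → ℝ) :
    Real.log (1 + ∑ _j ∈ F, Real.exp (-c)) -
      Real.exp (-c) / (1 + ∑ _j ∈ F, Real.exp (-c)) * ∑ j ∈ F, (s j - c) ≤
      Real.log (1 + ∑ j ∈ F, Real.exp (-(s j))) ∧
    (Real.log (1 + ∑ _j ∈ F, Real.exp (-c)) -
      Real.exp (-c) / (1 + ∑ _j ∈ F, Real.exp (-c)) * ∑ j ∈ F, (s j - c) =
      Real.log (1 + ∑ j ∈ F, Real.exp (-(s j))) → ∀ j ∈ F, s j = c) := by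
  set A0 := 1 + ∑ _j ∈ F, Real.exp (-c) with hA0
  set A := 1 + ∑ j ∈ F, Real.exp (-(s j)) with hA
  have hA0p : 0 < A0 := by
    have : 0 ≤ ∑ _j ∈ F, Real.exp (-c) := Finset.sum_nonneg fun _ _ => (Real.exp_pos _).le
    linarith
  have hAp : 0 < A := by
    have : 0 ≤ ∑ j ∈ F, Real.exp (-(s j)) := Finset.sum_nonneg fun _ _ => (Real.exp_pos _).le
    linarith
  set u := Real.log A - Real.log A0 with hu
  have heu : A * Real.exp (-u) = A0 := by
    rw [hu, neg_sub, Real.exp_sub, Real.exp_log hAp, Real.exp_log hA0p]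
    field_simp
  have hg0 : 0 ≤ Real.exp (-u) - 1 + u := by linarith [Real.add_one_le_exp (-u)]
  have hgj : ∀ j ∈ F, 0 ≤ Real.exp (-c) * (Real.exp (c - s j - u) - 1 - (c - s j - u)) := by
    intro j _
    apply mul_nonneg (Real.exp_pos _).le
    linarith [Real.add_one_le_exp (c - s j - u)]
  have hid : u * A0 + Real.exp (-c) * ∑ j ∈ F, (s j - c) = (Real.exp (-u) - 1 + u) +
      ∑ j ∈ F, Real.exp (-c) * (Real.exp (c - s j - u) - 1 - (c - s j - u)) := by
    have h1 : ∀ j ∈ F, Real.exp (-c) * (Real.exp (c - s j - u) - 1 - (c - s j - u)) =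
        Real.exp (-(s j)) * Real.exp (-u) - Real.exp (-c) + Real.exp (-c) * (s j - c)
          + u * Real.exp (-c) := by
      intro j _
      have : Real.exp (-c) * Real.exp (c - s j - u) = Real.exp (-(s j)) * Real.exp (-u) := by
        rw [← Real.exp_add, ← Real.exp_add]; congr 1; ring
      linear_combination this
    rw [Finset.sum_congr rfl h1, Finset.sum_add_distrib, Finset.sum_add_distrib,
      Finset.sum_sub_distrib (f := fun j => Real.exp (-(s j)) * Real.exp (-u)),
      ← Finset.sum_mul F (fun j => Real.exp (-(s j))), ← Finset.mul_sum F (fun _ => Real.exp (-c)) u,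
      ← Finset.mul_sum F (fun j => s j - c)]
    linear_combination -heu + (1 : ℝ) * (u - 1) * hA0 + Real.exp (-u) * hA
  have hs := Finset.sum_nonneg hgj
  have hdiv : Real.exp (-c) / A0 * ∑ j ∈ F, (s j - c) =
      (Real.exp (-c) * ∑ j ∈ F, (s j - c)) / A0 := by ring
  refine ⟨?_, ?_⟩
  · have : -((Real.exp (-c) * ∑ j ∈ F, (s j - c)) / A0) ≤ u := by
      rw [← neg_div, div_le_iff₀ hA0p]; linarith
    rw [hdiv]; linarith
  · intro he
    have h2 : u * A0 + Real.exp (-c) * ∑ j ∈ F, (s j - c) = 0 := by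
      have : u = -((Real.exp (-c) * ∑ j ∈ F, (s j - c)) / A0) := by
        rw [hdiv] at he; linarith
      rw [this]; field_simp; ring
    have h3 : Real.exp (-u) - 1 + u = 0 := by linarith
    have h4 : ∑ j ∈ F, Real.exp (-c) * (Real.exp (c - s j - u) - 1 - (c - s j - u)) = 0 := by
      linarith
    have hu0 : u = 0 := by
      by_contra hne
      linarith [Real.add_one_lt_exp (x := -u) (by simpa using hne)]
    intro j hj
    have h5 := (Finset.sum_eq_zero_iff_of_nonneg hgj).1 h4 j hj
    by_contra hne
    have h6 := Real.add_one_lt_exp (x := c - s j - u) (by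
      rw [hu0]; intro h; apply hne; linarith)
    have := mul_pos (Real.exp_pos (-c)) (sub_pos.2 h6)
    nlinarith

lemma nc_embed {V : Type*} [NormedAddCommGroup V] [InnerProductSpace ℝ V] (S : Submodule ℝ V)
    [FiniteDimensional ℝ S] {d : ℕ} (hle : Module.finrank ℝ S ≤ d) :
    Nonempty (S →ₗᵢ[ℝ] EuclideanSpace ℝ (Fin d)) := by
  have hc : Orthonormal ℝ (fun a => EuclideanSpace.basisFun (Fin d) ℝ (Fin.castLE hle a)) :=
    (EuclideanSpace.basisFun (Fin d) ℝ).orthonormal.comp _ (Fin.castLE_injective hle)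
  have hb := (stdOrthonormalBasis ℝ S).orthonormal
  refine ⟨LinearMap.isometryOfOrthonormal
    ((stdOrthonormalBasis ℝ S).toBasis.constr ℝ
      (fun a => EuclideanSpace.basisFun (Fin d) ℝ (Fin.castLE hle a)))
    (v := (stdOrthonormalBasis ℝ S).toBasis) (by simpa using hb) ?_⟩
  convert hc using 1
  funext a
  exact Module.Basis.constr_basis _ _ _ _

lemma nc_etf (K d : ℕ) (hK : 2 ≤ K) (hd : K - 1 ≤ d) :
    ∃ m : Fin K → EuclideanSpace ℝ (Fin d),
      ∀ k j, ⟪m k, m j⟫ = (if k = j then (1 : ℝ) else 0) - 1 / K := by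
  have hK0 : (K : ℝ) ≠ 0 := by positivity
  let o : EuclideanSpace ℝ (Fin K) := WithLp.toLp 2 (fun _ => (1 : ℝ))
  have ho : o ≠ 0 := by
    intro h
    have := congrArg (fun v : EuclideanSpace ℝ (Fin K) => v ⟨0, by omega⟩) h
    simp [o] at this
  let S := (ℝ ∙ o)ᗮ
  let v : Fin K → EuclideanSpace ℝ (Fin K) := fun k =>
    EuclideanSpace.single k (1 : ℝ) - (1 / K : ℝ) • o
  have hoo : ⟪o, o⟫ = (K : ℝ) := by
    rw [PiLp.inner_apply]; simp [o]
  have hos : ∀ k, ⟪o, EuclideanSpace.single k (1 : ℝ)⟫ = 1 := by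
    intro k; simp [o, EuclideanSpace.inner_single_right]
  have hso : ∀ k, ⟪EuclideanSpace.single k (1 : ℝ), o⟫ = 1 := by
    intro k; rw [real_inner_comm]; exact hos k
  have hv : ∀ k, v k ∈ S := by
    intro k
    rw [Submodule.mem_orthogonal_singleton_iff_inner_right]
    simp only [v, inner_sub_right, inner_smul_right, hoo, hos]
    field_simp; ring
  have hvv : ∀ k j, ⟪v k, v j⟫ = (if k = j then (1 : ℝ) else 0) - 1 / K := by
    intro k j
    simp only [v, inner_sub_right, inner_sub_left, inner_smul_right, inner_smul_left, hoo, hos, hso]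
    simp only [EuclideanSpace.inner_single_left, PiLp.single_apply]
    simp
    field_simp
    simp
  have hfr : Module.finrank ℝ S = K - 1 := by
    have : Fact (Module.finrank ℝ (EuclideanSpace ℝ (Fin K)) = (K - 1) + 1) :=
      ⟨by rw [finrank_euclideanSpace_fin]; omega⟩
    exact Submodule.finrank_orthogonal_span_singleton ho
  obtain ⟨φ⟩ := nc_embed S (by omega : Module.finrank ℝ S ≤ d)
  refine ⟨fun k => φ ⟨v k, hv k⟩, fun k j => ?_⟩
  rw [φ.inner_map_map, ← hvv k j]
  rfl

lemma nc_filter_sum {K : ℕ} (k : Fin K) (f : Fin K → ℝ) :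
    ∑ j ∈ univ.filter (fun j => j ≠ k), f j = ∑ j, f j - f k := by
  rw [Finset.filter_ne', Finset.sum_erase_eq_sub (Finset.mem_univ k)]

lemma nc_T {K n d : ℕ} (hK : 2 ≤ K) (hn : 1 ≤ n)
    (W : Fin K → EuclideanSpace ℝ (Fin d)) (H : Fin K → Fin n → EuclideanSpace ℝ (Fin d))
    (c : ℝ) (hc : c * (2 * (K - 1) * Real.sqrt n) = WF2 W + HF2 H) :
    -(∑ k, ∑ i, ∑ j ∈ univ.filter (fun j => j ≠ k), (sWH W H k i j - c)) =
      K * Real.sqrt n / 2 * (∑ k, ∑ i,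
        ‖(1 / Real.sqrt n) • (W k - (1 / K : ℝ) • ∑ j, W j) - H k i‖ ^ 2
        + K * ‖(1 / K : ℝ) • ∑ j, W j‖ ^ 2) := by
  have hK0 : (K : ℝ) ≠ 0 := by positivity
  have hn0 : (0 : ℝ) < n := by exact_mod_cast hn
  obtain ⟨g, hg, hgp⟩ : ∃ g, Real.sqrt n = g ∧ 0 < g := ⟨_, rfl, Real.sqrt_pos.2 hn0⟩
  have hgg : (n : ℝ) = g ^ 2 := by rw [← hg, Real.sq_sqrt hn0.le]
  rw [hg] at hc ⊢
  set m := (1 / K : ℝ) • ∑ j, W j with hm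
  have hsum : ∑ j, W j = (K : ℝ) • m := by rw [hm, smul_smul]; field_simp; simp
  have h1 : ∀ k i, ∑ j ∈ univ.filter (fun j => j ≠ k), (sWH W H k i j - c) =
      K * ⟪W k - m, H k i⟫ - (K - 1) * c := by
    intro k i
    rw [nc_filter_sum, Finset.sum_sub_distrib]
    have : ∑ j, sWH W H k i j = K * ⟪W k - m, H k i⟫ := by
      simp only [sWH]
      rw [← sum_inner, Finset.sum_sub_distrib, hsum]
      simp only [Finset.sum_const, Finset.card_univ, Fintype.card_fin, inner_sub_left,
        ← Nat.cast_smul_eq_nsmul ℝ, inner_smul_left]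
      simp; ring
    rw [this]
    simp [sWH]; ring
  have h2 : ∀ k i, ‖(1 / g) • (W k - m) - H k i‖ ^ 2 =
      1 / g ^ 2 * ‖W k - m‖ ^ 2 - 2 / g * ⟪W k - m, H k i⟫ + ‖H k i‖ ^ 2 := by
    intro k i
    rw [norm_sub_sq_real, norm_smul, inner_smul_left, mul_pow, Real.norm_eq_abs, sq_abs]
    simp; ring
  have h3 : ∑ k, ‖W k - m‖ ^ 2 = WF2 W - K * ‖m‖ ^ 2 := by
    simp only [norm_sub_sq_real, Finset.sum_add_distrib, Finset.sum_sub_distrib, WF2,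
      ← Finset.mul_sum]
    rw [← sum_inner, hsum, inner_smul_left, real_inner_self_eq_norm_sq]
    simp; ring
  simp only [h1, h2, Finset.sum_add_distrib, Finset.sum_sub_distrib, ← Finset.mul_sum,
    Finset.sum_const, Finset.card_univ, Fintype.card_fin, nsmul_eq_mul, h3]
  have h4 : ∑ k, ∑ i, ‖H k i‖ ^ 2 = HF2 H := rfl
  rw [h4]
  generalize ∑ k, ∑ i, ⟪W k - m, H k i⟫ = Q
  have : HF2 H = c * (2 * (K - 1) * g) - WF2 W := by linarith
  rw [this, hgg]
  field_simp
  ring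

theorem optimal_on_sphere_is_neural_collapse {K n d : ℕ}
    (hK : 2 ≤ K) (hn : 1 ≤ n) (hd : K - 1 ≤ d)
    (W : Fin K → EuclideanSpace ℝ (Fin d)) (H : Fin K → Fin n → EuclideanSpace ℝ (Fin d))
    (hne : ¬(W = 0 ∧ H = 0))
    (hopt : ∀ (W' : Fin K → EuclideanSpace ℝ (Fin d))
        (H' : Fin K → Fin n → EuclideanSpace ℝ (Fin d)),
        WF2 W' + HF2 H' = WF2 W + HF2 H → LWH W H ≤ LWH W' H') :
    NeuralCollapse W H ∧ (∀ k i, W k = Real.sqrt n • H k i) ∧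
      Real.sqrt (WF2 W) = Real.sqrt (HF2 H) := by
  have hK2 : (2 : ℝ) ≤ K := by exact_mod_cast hK
  have hK1 : (0 : ℝ) < K - 1 := by linarith
  have hK0 : (0 : ℝ) < K := by linarith
  have hn0 : (0 : ℝ) < n := by exact_mod_cast hn
  obtain ⟨g, hg, hgp⟩ : ∃ g, Real.sqrt n = g ∧ 0 < g := ⟨_, rfl, Real.sqrt_pos.2 hn0⟩
  have hgg : (n : ℝ) = g ^ 2 := by rw [← hg, Real.sq_sqrt hn0.le]
  have hR0 : 0 ≤ WF2 W + HF2 H := by unfold WF2 HF2; positivity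
  set R := WF2 W + HF2 H with hR
  set c := R / (2 * (K - 1) * g) with hcdef
  have hc : c * (2 * (K - 1) * Real.sqrt n) = WF2 W + HF2 H := by
    rw [hg, hcdef, div_mul_cancel₀ _ (by positivity)]
  -- upper bound
  have hup : LWH W H ≤ ∑ k : Fin K, ∑ _i : Fin n,
      Real.log (1 + ∑ _j ∈ univ.filter (fun j => j ≠ k), Real.exp (-c)) := by
    obtain ⟨m, hm⟩ := nc_etf K d hK hd
    obtain ⟨α, hα⟩ : ∃ α : ℝ, α ^ 2 = R / (2 * (K - 1)) :=
      ⟨Real.sqrt (R / (2 * (K - 1))), Real.sq_sqrt (by positivity)⟩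
    have hmn : ∀ k, ‖m k‖ ^ 2 = 1 - 1 / K := by
      intro k; rw [← real_inner_self_eq_norm_sq, hm]; simp
    have := hopt (fun k => α • m k) (fun k _ => (α / g) • m k) (by
      simp only [WF2, HF2, norm_smul, mul_pow, hmn, Real.norm_eq_abs, sq_abs, div_pow, hα]
      simp only [Finset.sum_const, Finset.card_univ, Fintype.card_fin, nsmul_eq_mul, hgg]
      have : (K : ℝ) - 1 ≠ 0 := hK1.ne'
      field_simp
      ring)
    refine this.trans (le_of_eq ?_)
    unfold LWH
    refine Finset.sum_congr rfl fun k _ => Finset.sum_congr rfl fun i _ => ?_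
    congr 2
    refine Finset.sum_congr rfl fun j hj => ?_
    have hjk : j ≠ k := by simpa using hj
    congr 2
    simp only [sWH, ← smul_sub, inner_smul_left, inner_smul_right, inner_sub_left, hm]
    simp only [if_true, if_neg hjk]
    simp
    have : α * (α / g) = c := by
      have : α * (α / g) = α ^ 2 / g := by ring
      rw [this, hα, hcdef, div_div]
    linarith
  have hT := nc_T hK hn W H c hc
  set p : ℝ := Real.exp (-c) / (1 + (K - 1) * Real.exp (-c)) with hp
  have hp0 : 0 < p := by positivity
  have hcard : ∀ k : Fin K, ∑ _j ∈ univ.filter (fun j => j ≠ k), Real.exp (-c) =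
      (K - 1) * Real.exp (-c) := by
    intro k; rw [nc_filter_sum]; simp; ring
  have hkey : ∀ k i, _ := fun k i =>
    nc_key_s4 (univ.filter (fun j : Fin K => j ≠ k)) c (fun j => sWH W H k i j)
  simp only [hcard, ← hp] at hkey hup
  set D := ∑ k, ∑ i, ∑ j ∈ univ.filter (fun j => j ≠ k), (sWH W H k i j - c) with hD
  set X := ∑ k, ∑ i, ‖(1 / Real.sqrt n) • (W k - (1 / K : ℝ) • ∑ j, W j) - H k i‖ ^ 2 with hX
  have hX0 : 0 ≤ X := by positivity
  have hm0 : 0 ≤ K * ‖(1 / K : ℝ) • ∑ j, W j‖ ^ 2 := by positivity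
  let lo : Fin K → Fin n → ℝ := fun k i => Real.log (1 + (K - 1) * Real.exp (-c)) -
    p * ∑ j ∈ univ.filter (fun j => j ≠ k), (sWH W H k i j - c)
  have hlo : ∑ k, ∑ i, lo k i = (∑ k : Fin K, ∑ _i : Fin n,
      Real.log (1 + (K - 1) * Real.exp (-c))) - p * D := by
    simp only [lo, Finset.sum_sub_distrib, ← Finset.mul_sum, hD]
  have hle : ∑ k, ∑ i, lo k i ≤ LWH W H :=
    Finset.sum_le_sum fun k _ => Finset.sum_le_sum fun i _ => (hkey k i).1
  have hD0 : D ≤ 0 := by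
    have : 0 ≤ -D := by rw [hT]; positivity
    linarith
  have hDz : D = 0 := by
    have : 0 ≤ p * D := by linarith
    exact le_antisymm hD0 (nonneg_of_mul_nonneg_right this hp0)
  have heq : ∑ k, ∑ i, lo k i = LWH W H := by
    rw [hDz, mul_zero, sub_zero] at hlo
    linarith
  have hs : ∀ k i j, j ≠ k → sWH W H k i j = c := by
    intro k i j hjk
    have e1 := (Finset.sum_eq_sum_iff_of_le
      (fun k _ => Finset.sum_le_sum fun i _ => (hkey k i).1)).1 heq k (Finset.mem_univ _)
    have e2 := (Finset.sum_eq_sum_iff_of_le (fun i _ => (hkey k i).1)).1 e1 i (Finset.mem_univ _)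
    exact (hkey k i).2 e2 j (by simpa using hjk)
  have hXm : X + K * ‖(1 / K : ℝ) • ∑ j, W j‖ ^ 2 = 0 := by
    rw [hDz, neg_zero, hg] at hT
    have : (K : ℝ) * g / 2 ≠ 0 := by positivity
    exact (mul_eq_zero.1 hT.symm).resolve_left this
  have hmz : (1 / K : ℝ) • ∑ j, W j = 0 := by
    have : K * ‖(1 / K : ℝ) • ∑ j, W j‖ ^ 2 = 0 := by linarith
    have := (mul_eq_zero.1 this).resolve_left hK0.ne'
    simpa using this
  have hWs : ∑ j, W j = 0 := (smul_eq_zero.1 hmz).resolve_left (by positivity)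
  have hXz : X = 0 := by linarith
  have hWH : ∀ k i, W k = g • H k i := by
    intro k i
    have e1 := (Finset.sum_eq_zero_iff_of_nonneg (fun k _ => by positivity)).1 hXz k
      (Finset.mem_univ _)
    have e2 := (Finset.sum_eq_zero_iff_of_nonneg (fun i _ => by positivity)).1 e1 i
      (Finset.mem_univ _)
    rw [hmz, hg, sub_zero] at e2
    have e3 : (1 / g) • W k = H k i := by
      rw [← sub_eq_zero, ← norm_eq_zero]; exact pow_eq_zero_iff (two_ne_zero) |>.1 e2
    rw [← e3, smul_smul, mul_one_div_cancel hgp.ne', one_smul]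
  have hHW : ∀ k i, H k i = (1 / g) • W k := by
    intro k i
    rw [hWH k i, smul_smul, one_div_mul_cancel hgp.ne', one_smul]
  let i0 : Fin n := ⟨0, by omega⟩
  have hin : ∀ k j, j ≠ k → ⟪W k - W j, W k⟫ = g * c := by
    intro k j hjk
    have := hs k i0 j hjk
    rw [← this, sWH]
    conv_lhs => rw [hWH k i0, inner_smul_right]
    rw [← hWH k i0]
  have hsq : ∀ k, K * ‖W k‖ ^ 2 = (K - 1) * (g * c) := by
    intro k
    have e : ∑ j ∈ univ.filter (fun j => j ≠ k), ⟪W k - W j, W k⟫ =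
        ∑ j ∈ univ.filter (fun j => j ≠ k), g * c :=
      Finset.sum_congr rfl fun j hj => hin k j (by simpa using hj)
    rw [nc_filter_sum, nc_filter_sum, ← sum_inner, Finset.sum_sub_distrib, hWs] at e
    simp [← Nat.cast_smul_eq_nsmul ℝ, inner_smul_left] at e
    linarith
  have hnorm : ∀ k k', ‖W k‖ = ‖W k'‖ := by
    intro k k'
    have : ‖W k‖ ^ 2 = ‖W k'‖ ^ 2 := by
      apply mul_left_cancel₀ hK0.ne'
      rw [hsq, hsq]
    exact (sq_eq_sq₀ (norm_nonneg _) (norm_nonneg _)).1 this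
  have hWne : ∀ k, W k ≠ 0 := by
    intro k hk
    apply hne
    have hW0 : ∀ k', W k' = 0 := by
      intro k'
      rw [← norm_eq_zero, hnorm k' k, hk, norm_zero]
    refine ⟨funext hW0, ?_⟩
    funext k' i
    rw [hHW, hW0]; simp
  have hoff : ∀ k j, k ≠ j → ⟪W k, W j⟫ = -(‖W k‖ * ‖W j‖) / ((K : ℝ) - 1) := by
    intro k j hkj
    have e := hin k j hkj.symm
    rw [inner_sub_left, real_inner_self_eq_norm_sq, real_inner_comm] at e
    rw [hnorm j k, eq_div_iff hK1.ne']
    linear_combination (-(K - 1 : ℝ)) * e + hsq k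
  refine ⟨⟨?_, hWs, hnorm, ?_, ?_, ?_, g, hgp, hWH⟩, ?_, ?_⟩
  · intro k i i'; rw [hHW k i, hHW k i']
  · intro k k' i i'; rw [hHW k i, hHW k' i', norm_smul, norm_smul, hnorm k k']
  · intro k i h
    exact hWne k (by rw [hWH k i, h, smul_zero])
  · intro k j hkj i i'
    rw [hHW k i, hHW j i', inner_smul_left, inner_smul_right, hoff k j hkj, norm_smul, norm_smul,
      Real.norm_of_nonneg (by positivity)]
    simp
    ring
  · rw [hg]; exact hWH
  · congr 1
    unfold WF2 HF2
    refine Finset.sum_congr rfl fun k _ => ?_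
    simp only [hHW, norm_smul, mul_pow, Finset.sum_const, Finset.card_univ, Fintype.card_fin,
      nsmul_eq_mul, hgg, Real.norm_eq_abs, sq_abs]
    field_simp
end

section
/- For every classifier W and feature matrix H, the cross-entropy loss satisfies L(W,H) ≥ nK · log(1 + (K−1)·exp(−(‖W‖_F² + ‖H‖_F²)/(2√n(K−1)))). -/
open scoped BigOperators RealInnerProductSpace
open Finset

theorem aux_log {ι : Type*} (A : Finset ι) (s : ι → ℝ) (q : ℝ) :
    Real.log (1 + (#A : ℝ) * Real.exp (-q)) +
      Real.exp (-q) / (1 + (#A : ℝ) * Real.exp (-q)) * ∑ j ∈ A, (q - s j)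
      ≤ Real.log (1 + ∑ j ∈ A, Real.exp (-(s j))) := by
  set E := Real.exp (-q) with hE
  have hEpos : 0 < E := Real.exp_pos _
  set D := ∑ j ∈ A, (q - s j) with hD
  have hM : 0 < 1 + (#A : ℝ) * E := by positivity
  set c := E / (1 + (#A : ℝ) * E) * D with hc
  have hcD : (1 + (#A : ℝ) * E) * c = E * D := by
    rw [hc]; field_simp
  have key : ∀ x : ℝ, Real.exp c * (1 + x - c) ≤ Real.exp x := by
    intro x
    have h1 := Real.add_one_le_exp (x - c)
    have h2 : Real.exp x = Real.exp c * Real.exp (x - c) := by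
      rw [← Real.exp_add]; congr 1; ring
    rw [h2]
    exact mul_le_mul_of_nonneg_left (by linarith) (Real.exp_pos c).le
  have h0 := key 0
  rw [Real.exp_zero] at h0
  have hs : ∑ j ∈ A, E * (Real.exp c * (1 + (q - s j) - c)) ≤ ∑ j ∈ A, Real.exp (-(s j)) := by
    apply Finset.sum_le_sum
    intro j _
    have h2 : Real.exp (-(s j)) = E * Real.exp (q - s j) := by
      rw [hE, ← Real.exp_add]; congr 1; ring
    rw [h2]
    exact mul_le_mul_of_nonneg_left (key _) hEpos.le
  have hs2 : ∑ j ∈ A, E * (Real.exp c * (1 + (q - s j) - c))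
      = E * Real.exp c * ((#A : ℝ) * (1 - c) + D) := by
    have : ∀ j ∈ A, E * (Real.exp c * (1 + (q - s j) - c))
        = E * Real.exp c * ((1 - c) + (q - s j)) := by
      intro j _; ring
    rw [Finset.sum_congr rfl this, ← Finset.mul_sum, Finset.sum_add_distrib, Finset.sum_const,
      nsmul_eq_mul]
  have hfin : (1 + (#A : ℝ) * E) * Real.exp c ≤ 1 + ∑ j ∈ A, Real.exp (-(s j)) := by
    have : (1 + (#A : ℝ) * E) * Real.exp c
        = Real.exp c * (1 + 0 - c) + E * Real.exp c * ((#A : ℝ) * (1 - c) + D) := by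
      linear_combination Real.exp c * hcD
    linarith
  calc Real.log (1 + (#A : ℝ) * E) + c = Real.log ((1 + (#A : ℝ) * E) * Real.exp c) := by
        rw [Real.log_mul hM.ne' (Real.exp_pos c).ne', Real.log_exp]
    _ ≤ _ := Real.log_le_log (by positivity) hfin

theorem aux_sum {K n d : ℕ} (hK : 2 ≤ K) (hn : 1 ≤ n)
    (W : Fin K → EuclideanSpace ℝ (Fin d)) (H : Fin K → Fin n → EuclideanSpace ℝ (Fin d)) :
    ∑ k, ∑ i, ∑ j ∈ univ.filter (fun j => j ≠ k), sWH W H k i j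
      ≤ (K : ℝ) * Real.sqrt n / 2 * (WF2 W + HF2 H) := by
  have hKpos : (0 : ℝ) < K := by exact_mod_cast (by omega : 0 < K)
  have hnpos : (0 : ℝ) < n := by exact_mod_cast hn
  set r := Real.sqrt n with hr
  have hrpos : 0 < r := Real.sqrt_pos.mpr hnpos
  have hrr : r * r = n := Real.mul_self_sqrt hnpos.le
  set S := ∑ j, W j with hS
  have h1 : ∀ k i, ∑ j ∈ univ.filter (fun j => j ≠ k), sWH W H k i j
      = ⟪(K : ℝ) • W k - S, H k i⟫ := by
    intro k i
    rw [Finset.sum_filter_of_ne]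
    · simp only [sWH]
      rw [← sum_inner, Finset.sum_sub_distrib, Finset.sum_const, Finset.card_univ,
        Fintype.card_fin, Nat.cast_smul_eq_nsmul]
    · intro j _ hj hjk
      apply hj
      simp [sWH, hjk]
  have h2 : ∀ k i, ⟪(K : ℝ) • W k - S, H k i⟫
      ≤ 1 / (2 * r * K) * ‖(K : ℝ) • W k - S‖ ^ 2 + K * r / 2 * ‖H k i‖ ^ 2 := by
    intro k i
    refine (real_inner_le_norm _ _).trans ?_
    generalize ‖(K : ℝ) • W k - S‖ = a
    generalize ‖H k i‖ = b
    have : 1 / (2 * r * K) * a ^ 2 + K * r / 2 * b ^ 2 - a * b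
        = 1 / (2 * r * K) * (a - K * r * b) ^ 2 := by
      field_simp; ring
    have h : 0 ≤ 1 / (2 * r * K) * (a - K * r * b) ^ 2 := by positivity
    linarith
  have h3 : ∑ k, ‖(K : ℝ) • W k - S‖ ^ 2 ≤ (K : ℝ) ^ 2 * WF2 W := by
    have e : ∀ k, ‖(K : ℝ) • W k - S‖ ^ 2
        = (K : ℝ) ^ 2 * ‖W k‖ ^ 2 - 2 * K * ⟪W k, S⟫ + ‖S‖ ^ 2 := by
      intro k
      rw [norm_sub_sq_real, norm_smul, real_inner_smul_left, mul_pow, Real.norm_eq_abs, sq_abs]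
      ring
    simp only [e]
    rw [Finset.sum_add_distrib, Finset.sum_sub_distrib, ← Finset.mul_sum, ← Finset.mul_sum,
      ← sum_inner, ← hS, real_inner_self_eq_norm_sq, Finset.sum_const, Finset.card_univ,
      Fintype.card_fin, nsmul_eq_mul, WF2]
    have : 0 ≤ (K : ℝ) * ‖S‖ ^ 2 := by positivity
    linarith
  simp only [h1]
  calc _ ≤ ∑ k, ∑ i, (1 / (2 * r * K) * ‖(K : ℝ) • W k - S‖ ^ 2 + K * r / 2 * ‖H k i‖ ^ 2) :=
        Finset.sum_le_sum fun k _ => Finset.sum_le_sum fun i _ => h2 k i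
    _ = r / (2 * K) * (∑ k, ‖(K : ℝ) • W k - S‖ ^ 2) + K * r / 2 * HF2 H := by
        simp only [Finset.sum_add_distrib, ← Finset.mul_sum, Finset.sum_const, Finset.card_univ,
          Fintype.card_fin, nsmul_eq_mul, HF2]
        rw [← hrr]
        field_simp
    _ ≤ r / (2 * K) * ((K : ℝ) ^ 2 * WF2 W) + K * r / 2 * HF2 H := by gcongr
    _ = _ := by field_simp

theorem loss_lower_bound {K n d : ℕ} (hK : 2 ≤ K) (hn : 1 ≤ n) (hd : 1 ≤ d)
    (W : Fin K → EuclideanSpace ℝ (Fin d)) (H : Fin K → Fin n → EuclideanSpace ℝ (Fin d)) :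
    (n : ℝ) * (K : ℝ) *
        Real.log (1 + ((K : ℝ) - 1) *
          Real.exp (-((WF2 W + HF2 H) / (2 * Real.sqrt n * ((K : ℝ) - 1)))))
      ≤ LWH W H := by
  have hKpos : (0 : ℝ) < (K : ℝ) - 1 := by
    have : (2 : ℝ) ≤ K := by exact_mod_cast hK
    linarith
  have hnpos : (0 : ℝ) < n := by exact_mod_cast hn
  have hsum := aux_sum hK hn W H
  have hrpos : 0 < Real.sqrt n := Real.sqrt_pos.mpr hnpos
  have hrr : Real.sqrt n * Real.sqrt n = n := Real.mul_self_sqrt hnpos.le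
  set q := (WF2 W + HF2 H) / (2 * Real.sqrt n * ((K : ℝ) - 1)) with hq
  have hcard : ∀ k : Fin K, ((#(univ.filter (fun j => j ≠ k)) : ℕ) : ℝ) = (K : ℝ) - 1 := by
    intro k
    rw [Finset.filter_ne', Finset.card_erase_of_mem (Finset.mem_univ k), Finset.card_univ,
      Fintype.card_fin, Nat.cast_sub (by omega), Nat.cast_one]
  set p := Real.exp (-q) / (1 + ((K : ℝ) - 1) * Real.exp (-q)) with hp
  have hp0 : 0 ≤ p := by positivity
  set L := Real.log (1 + ((K : ℝ) - 1) * Real.exp (-q)) with hL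
  have hpt : ∀ (k : Fin K) (i : Fin n),
      L + p * (((K : ℝ) - 1) * q - ∑ j ∈ univ.filter (fun j => j ≠ k), sWH W H k i j)
      ≤ Real.log (1 + ∑ j ∈ univ.filter (fun j => j ≠ k), Real.exp (-(sWH W H k i j))) := by
    intro k i
    have h := aux_log (univ.filter (fun j => j ≠ k)) (fun j => sWH W H k i j) q
    rw [Finset.sum_sub_distrib, Finset.sum_const, nsmul_eq_mul, hcard k] at h
    exact h
  have htot : ∑ k : Fin K, ∑ i : Fin n,
      (L + p * (((K : ℝ) - 1) * q - ∑ j ∈ univ.filter (fun j => j ≠ k), sWH W H k i j))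
      ≤ LWH W H :=
    Finset.sum_le_sum fun k _ => Finset.sum_le_sum fun i _ => hpt k i
  simp only [Finset.sum_add_distrib, ← Finset.mul_sum, Finset.sum_sub_distrib, Finset.sum_const,
    Finset.card_univ, Fintype.card_fin, nsmul_eq_mul] at htot
  have hqe : ((K : ℝ) - 1) * (n * ((K : ℝ) * q))
      = (K : ℝ) * Real.sqrt n / 2 * (WF2 W + HF2 H) := by
    rw [hq]
    nth_rewrite 1 [← hrr]
    field_simp
  rw [hqe] at htot
  have := mul_nonneg hp0 (sub_nonneg.mpr hsum)
  linarith
end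

section
/- Assume d ≥ K−1, (W,H) ≠ (0,0), and (W,H) does NOT satisfy the neural collapse conditions with ‖W‖_F = ‖H‖_F. Then for every ε > 0 there exists (W',H') such that ‖W'‖_F² + ‖H'‖_F² = ‖W‖_F² + ‖H‖_F², ‖W'−W‖_F² + ‖H'−H‖_F² < ε, and L(W',H') < L(W,H). -/
open scoped BigOperators RealInnerProductSpace
open Finset

namespace NCProof

/-- Cross-entropy loss as a function of logits. -/
noncomputable def Lz {K n : ℕ} (Z : Fin K → Fin n → Fin K → ℝ) : ℝ :=
  ∑ k, ∑ i, (Real.log (∑ j, Real.exp (Z k i j)) - Z k i k)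

/-- Softmax probabilities. -/
noncomputable def pz {K n : ℕ} (Z : Fin K → Fin n → Fin K → ℝ) (k : Fin K) (i : Fin n)
    (j : Fin K) : ℝ := Real.exp (Z k i j) / ∑ j', Real.exp (Z k i j')

/-- Gradient of the loss with respect to logits. -/
noncomputable def gz {K n : ℕ} (Z : Fin K → Fin n → Fin K → ℝ) (k : Fin K) (i : Fin n)
    (j : Fin K) : ℝ := pz Z k i j - if j = k then 1 else 0

/-- Directional derivative. -/
noncomputable def dz {K n : ℕ} (Z D : Fin K → Fin n → Fin K → ℝ) : ℝ :=
  ∑ k, ∑ i, ∑ j, gz Z k i j * D k i j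

noncomputable def zz {K n d : ℕ} (W : Fin K → EuclideanSpace ℝ (Fin d))
    (H : Fin K → Fin n → EuclideanSpace ℝ (Fin d)) : Fin K → Fin n → Fin K → ℝ :=
  fun k i j => ⟪W j, H k i⟫

lemma sum_exp_pos {K : ℕ} (k : Fin K) (z : Fin K → ℝ) : 0 < ∑ j, Real.exp (z j) :=
  Finset.sum_pos (fun _ _ => Real.exp_pos _) ⟨k, Finset.mem_univ k⟩

lemma pz_pos {K n : ℕ} (Z : Fin K → Fin n → Fin K → ℝ) (k i j) : 0 < pz Z k i j :=
  div_pos (Real.exp_pos _) (sum_exp_pos k _)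

lemma pz_sum {K n : ℕ} (Z : Fin K → Fin n → Fin K → ℝ) (k i) : ∑ j, pz Z k i j = 1 := by
  unfold pz
  rw [← Finset.sum_div]
  exact div_self (sum_exp_pos k _).ne'

lemma gz_sum {K n : ℕ} (Z : Fin K → Fin n → Fin K → ℝ) (k i) : ∑ j, gz Z k i j = 0 := by
  unfold gz
  rw [Finset.sum_sub_distrib, pz_sum]
  simp

lemma gz_sum_mul {K n : ℕ} (Z : Fin K → Fin n → Fin K → ℝ) (k i) (D : Fin K → ℝ) :
    ∑ j, gz Z k i j * D j = ∑ j, pz Z k i j * D j - D k := by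
  unfold gz
  simp [sub_mul, Finset.sum_sub_distrib]

lemma LWH_eq {K n d : ℕ} (W : Fin K → EuclideanSpace ℝ (Fin d))
    (H : Fin K → Fin n → EuclideanSpace ℝ (Fin d)) : LWH W H = Lz (zz W H) := by
  unfold LWH Lz zz sWH
  refine Finset.sum_congr rfl fun k _ => Finset.sum_congr rfl fun i _ => ?_
  have h1 : (1 + ∑ j ∈ univ.filter (fun j => j ≠ k), Real.exp (-⟪W k - W j, H k i⟫))
      = (∑ j, Real.exp ⟪W j, H k i⟫) / Real.exp ⟪W k, H k i⟫ := by
    rw [Finset.sum_div]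
    have : ∀ j, Real.exp ⟪W j, H k i⟫ / Real.exp ⟪W k, H k i⟫
        = Real.exp (-⟪W k - W j, H k i⟫) := by
      intro j
      rw [← Real.exp_sub, inner_sub_left]
      congr 1; ring
    simp_rw [this]
    rw [Finset.filter_ne', ← Finset.add_sum_erase univ _ (Finset.mem_univ k)]
    simp
  rw [h1, Real.log_div (sum_exp_pos k _).ne' (Real.exp_pos _).ne', Real.log_exp]

lemma Lz_deriv {K n : ℕ} (Z : ℝ → Fin K → Fin n → Fin K → ℝ) (D : Fin K → Fin n → Fin K → ℝ)
    (t : ℝ) (h : ∀ k i j, HasDerivAt (fun s => Z s k i j) (D k i j) t) :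
    HasDerivAt (fun s => Lz (Z s)) (dz (Z t) D) t := by
  unfold Lz dz
  refine HasDerivAt.fun_sum fun k _ => HasDerivAt.fun_sum fun i _ => ?_
  rw [gz_sum_mul]
  refine HasDerivAt.sub ?_ (h k i k)
  have h1 : HasDerivAt (fun s => ∑ j, Real.exp (Z s k i j))
      (∑ j, Real.exp (Z t k i j) * D k i j) t :=
    HasDerivAt.fun_sum fun j _ => (h k i j).exp
  have h2 := h1.log (sum_exp_pos k _).ne'
  refine h2.congr_deriv ?_
  unfold pz
  rw [Finset.sum_div]
  refine Finset.sum_congr rfl fun j _ => ?_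
  ring

lemma scalar_deriv (c N b e z z1 z2 : ℝ) (hN : N ≠ 0) :
    HasDerivAt (fun t : ℝ => c / (N + t * b + t ^ 2 * e) * (z + t * z1 + t ^ 2 * z2))
      (c / N * z1 - c / N * (b / N) * z) 0 := by
  have e1 : ∀ N b e : ℝ, HasDerivAt (fun t : ℝ => N + t * b + t ^ 2 * e) b 0 := by
    intro N b e
    have := (((hasDerivAt_id (0:ℝ)).mul_const b).const_add N).add
        (((hasDerivAt_id (0:ℝ)).pow 2).mul_const e)
    exact this.congr_deriv (by simp)
  have e3 := ((hasDerivAt_const (0:ℝ) c).div (e1 N b e) (by simpa using hN)).mul (e1 z z1 z2)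
  refine e3.congr_deriv ?_
  simp
  field_simp
  ring

lemma lse_ineq {K n : ℕ} (Z Z' : Fin K → Fin n → Fin K → ℝ) (k i) :
    (Real.log (∑ j, Real.exp (Z k i j)) - Z k i k)
      + ∑ j, gz Z k i j * (Z' k i j - Z k i j)
      ≤ Real.log (∑ j, Real.exp (Z' k i j)) - Z' k i k ∧
    ((Real.log (∑ j, Real.exp (Z k i j)) - Z k i k)
      + ∑ j, gz Z k i j * (Z' k i j - Z k i j)
      = Real.log (∑ j, Real.exp (Z' k i j)) - Z' k i k →
      ∀ j j', Z' k i j - Z k i j = Z' k i j' - Z k i j') := by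
  rw [gz_sum_mul]
  set m := ∑ j, pz Z k i j * (Z' k i j - Z k i j) with hm
  have hS := sum_exp_pos k (Z k i)
  have hS' := sum_exp_pos k (Z' k i)
  set S := ∑ j, Real.exp (Z k i j) with hSd
  set S' := ∑ j, Real.exp (Z' k i j) with hSd'
  have hratio : S' / S = Real.exp m * ∑ j, pz Z k i j * Real.exp (Z' k i j - Z k i j - m) := by
    rw [Finset.mul_sum, hSd', Finset.sum_div]
    refine Finset.sum_congr rfl fun j _ => ?_
    unfold pz
    rw [← hSd, div_mul_eq_mul_div, ← Real.exp_add, mul_div_assoc', ← Real.exp_add]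
    congr 2; ring
  have hlin : ∑ j, pz Z k i j * ((Z' k i j - Z k i j - m) + 1) = 1 := by
    have : ∀ j, pz Z k i j * ((Z' k i j - Z k i j - m) + 1)
        = pz Z k i j * (Z' k i j - Z k i j) + pz Z k i j * (1 - m) := by intro j; ring
    simp_rw [this]
    rw [Finset.sum_add_distrib, ← Finset.sum_mul, pz_sum, ← hm]; ring
  have hterm : ∀ j ∈ (univ : Finset (Fin K)), pz Z k i j * ((Z' k i j - Z k i j - m) + 1)
      ≤ pz Z k i j * Real.exp (Z' k i j - Z k i j - m) := fun j _ =>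
    mul_le_mul_of_nonneg_left (Real.add_one_le_exp _) (pz_pos Z k i j).le
  have hT : 1 ≤ ∑ j, pz Z k i j * Real.exp (Z' k i j - Z k i j - m) := by
    rw [← hlin]; exact Finset.sum_le_sum hterm
  have hlog : Real.log S' - Real.log S
      = m + Real.log (∑ j, pz Z k i j * Real.exp (Z' k i j - Z k i j - m)) := by
    rw [← Real.log_div hS'.ne' hS.ne', hratio, Real.log_mul (Real.exp_pos _).ne' (by linarith),
      Real.log_exp]
  constructor
  · have := Real.log_nonneg hT
    linarith
  · intro heq
    have h0 : Real.log (∑ j, pz Z k i j * Real.exp (Z' k i j - Z k i j - m)) = 0 := by linarith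
    have h1 : ∑ j, pz Z k i j * Real.exp (Z' k i j - Z k i j - m) = 1 := by
      have := Real.exp_log (lt_of_lt_of_le one_pos hT)
      rw [← this, h0, Real.exp_zero]
    have h2 := (Finset.sum_eq_sum_iff_of_le hterm).1 (by rw [hlin, h1])
    have h3 : ∀ j, Z' k i j - Z k i j = m := by
      intro j
      by_contra hne
      have := Real.add_one_lt_exp (sub_ne_zero.2 hne)
      have h4 := mul_left_cancel₀ (pz_pos Z k i j).ne' (h2 j (Finset.mem_univ j))
      linarith
    intro j j'
    rw [h3, h3]

lemma Lz_convex {K n : ℕ} (Z Z' : Fin K → Fin n → Fin K → ℝ) :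
    Lz Z + dz Z (fun k i j => Z' k i j - Z k i j) ≤ Lz Z' := by
  unfold Lz dz
  rw [← Finset.sum_add_distrib]
  refine Finset.sum_le_sum fun k _ => ?_
  rw [← Finset.sum_add_distrib]
  exact Finset.sum_le_sum fun i _ => (lse_ineq Z Z' k i).1

lemma Lz_strict {K n : ℕ} (Z Z' : Fin K → Fin n → Fin K → ℝ)
    (heq : Lz Z' ≤ Lz Z + dz Z (fun k i j => Z' k i j - Z k i j)) :
    ∀ k i j j', Z' k i j - Z k i j = Z' k i j' - Z k i j' := by
  have h := le_antisymm (Lz_convex Z Z') heq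
  unfold Lz dz at h
  rw [← Finset.sum_add_distrib] at h
  simp_rw [← Finset.sum_add_distrib] at h
  intro k i
  have h1 := (Finset.sum_eq_sum_iff_of_le
    (fun k _ => Finset.sum_le_sum fun i _ => (lse_ineq Z Z' k i).1)).1 h k (Finset.mem_univ k)
  have h2 := (Finset.sum_eq_sum_iff_of_le
    (fun i _ => (lse_ineq Z Z' k i).1)).1 h1 i (Finset.mem_univ i)
  exact (lse_ineq Z Z' k i).2 h2

lemma dz_add {K n : ℕ} (Z D D' : Fin K → Fin n → Fin K → ℝ) :
    dz Z (fun k i j => D k i j + D' k i j) = dz Z D + dz Z D' := by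
  unfold dz; simp only [mul_add, Finset.sum_add_distrib]

lemma dz_sub {K n : ℕ} (Z D D' : Fin K → Fin n → Fin K → ℝ) :
    dz Z (fun k i j => D k i j - D' k i j) = dz Z D - dz Z D' := by
  unfold dz; simp only [mul_sub, Finset.sum_sub_distrib]

lemma dz_mul {K n : ℕ} (Z D : Fin K → Fin n → Fin K → ℝ) (a : ℝ) :
    dz Z (fun k i j => a * D k i j) = a * dz Z D := by
  unfold dz
  simp only [Finset.mul_sum]
  refine Finset.sum_congr rfl fun k _ => Finset.sum_congr rfl fun i _ =>
    Finset.sum_congr rfl fun j _ => ?_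
  ring

lemma dz_const {K n : ℕ} (Z : Fin K → Fin n → Fin K → ℝ) (D : Fin K → Fin n → ℝ) :
    dz Z (fun k i _ => D k i) = 0 := by
  unfold dz
  simp only [← Finset.sum_mul, gz_sum, zero_mul, Finset.sum_const_zero]

noncomputable def NN {K n d : ℕ} (W : Fin K → EuclideanSpace ℝ (Fin d))
    (H : Fin K → Fin n → EuclideanSpace ℝ (Fin d)) : ℝ := WF2 W + HF2 H

noncomputable def ip {K n d : ℕ} (W : Fin K → EuclideanSpace ℝ (Fin d))
    (H : Fin K → Fin n → EuclideanSpace ℝ (Fin d)) (A : Fin K → EuclideanSpace ℝ (Fin d))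
    (B : Fin K → Fin n → EuclideanSpace ℝ (Fin d)) : ℝ :=
  (∑ k, ⟪W k, A k⟫) + ∑ k, ∑ i, ⟪H k i, B k i⟫

noncomputable def Phi {K n d : ℕ} (c : ℝ)
    (x : (Fin K → EuclideanSpace ℝ (Fin d)) × (Fin K → Fin n → EuclideanSpace ℝ (Fin d))) : ℝ :=
  Lz (fun k i j => c / NN x.1 x.2 * zz x.1 x.2 k i j)

section
variable {K n d : ℕ} (W : Fin K → EuclideanSpace ℝ (Fin d))
    (H : Fin K → Fin n → EuclideanSpace ℝ (Fin d)) (A : Fin K → EuclideanSpace ℝ (Fin d))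
    (B : Fin K → Fin n → EuclideanSpace ℝ (Fin d))

lemma NN_expand (t : ℝ) : NN (W + t • A) (H + t • B)
    = NN W H + t * (2 * ip W H A B) + t ^ 2 * NN A B := by
  unfold NN ip WF2 HF2
  have h : ∀ x y : EuclideanSpace ℝ (Fin d),
      ‖x + t • y‖ ^ 2 = ‖x‖ ^ 2 + t * (2 * ⟪x, y⟫) + t ^ 2 * ‖y‖ ^ 2 := by
    intro x y
    rw [norm_add_sq_real, inner_smul_right, norm_smul, mul_pow]
    simp; ring
  simp only [Pi.add_apply, Pi.smul_apply, h, Finset.sum_add_distrib, ← Finset.mul_sum]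
  ring

lemma zz_expand (t : ℝ) (k i j) : zz (W + t • A) (H + t • B) k i j
    = zz W H k i j + t * (zz A H k i j + zz W B k i j) + t ^ 2 * zz A B k i j := by
  unfold zz
  simp only [Pi.add_apply, Pi.smul_apply, inner_add_left, inner_add_right, real_inner_smul_left,
    real_inner_smul_right]
  ring

lemma NN_nonneg : 0 ≤ NN W H := by unfold NN WF2 HF2; positivity

lemma NN_smul (s : ℝ) : NN (s • W) (s • H) = s ^ 2 * NN W H := by
  unfold NN WF2 HF2
  simp only [Pi.smul_apply, norm_smul, mul_pow, ← Finset.mul_sum]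
  simp; ring

lemma NN_pos (hne : ¬(W = 0 ∧ H = 0)) : 0 < NN W H := by
  refine lt_of_le_of_ne (NN_nonneg W H) fun h => hne ?_
  unfold NN WF2 HF2 at h
  have h1 : 0 ≤ ∑ k, ‖W k‖ ^ 2 := by positivity
  have h2 : 0 ≤ ∑ k, ∑ i, ‖H k i‖ ^ 2 := by positivity
  have h3 : ∑ k, ‖W k‖ ^ 2 = 0 := by linarith
  have h4 : ∑ k, ∑ i, ‖H k i‖ ^ 2 = 0 := by linarith
  constructor
  · funext k
    have := (Finset.sum_eq_zero_iff_of_nonneg (fun k _ => by positivity)).1 h3 k (by simp)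
    simpa using this
  · funext k i
    have h5 := (Finset.sum_eq_zero_iff_of_nonneg (fun k _ => by positivity)).1 h4 k (by simp)
    have := (Finset.sum_eq_zero_iff_of_nonneg (fun k _ => by positivity)).1 h5 i (by simp)
    simpa using this

lemma curve_tendsto : Filter.Tendsto (fun t : ℝ => (W + t • A, H + t • B)) (nhds 0)
    (nhds (W, H)) := by
  have : Continuous (fun t : ℝ => (W + t • A, H + t • B)) := by fun_prop
  simpa using this.tendsto 0

lemma first_order {c : ℝ} (hc : 0 < c) (hN : 0 < NN W H) (hloc : IsLocalMin (Phi c) (W, H)) :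
    dz (fun k i j => c / NN W H * zz W H k i j) (fun k i j => zz A H k i j + zz W B k i j)
    = 2 * ip W H A B / NN W H * dz (fun k i j => c / NN W H * zz W H k i j) (zz W H) := by
  have h1 : ∀ᶠ t in nhds (0:ℝ), Phi c (W, H) ≤ Phi c (W + t • A, H + t • B) :=
    (curve_tendsto W H A B).eventually hloc
  have h2 : IsLocalMin (fun t : ℝ => Phi c (W + t • A, H + t • B)) 0 := by
    filter_upwards [h1] with t ht
    simpa using ht
  have h3 := Lz_deriv (fun t k i j => c / NN (W + t • A) (H + t • B) *
      zz (W + t • A) (H + t • B) k i j)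
    (fun k i j => c / NN W H * (zz A H k i j + zz W B k i j)
      - c / NN W H * (2 * ip W H A B / NN W H) * zz W H k i j) 0 (by
    intro k i j
    simp only [NN_expand, zz_expand]
    exact scalar_deriv _ _ _ _ _ _ _ hN.ne')
  have h4 := h2.hasDerivAt_eq_zero h3
  simp only [zero_smul, add_zero] at h4
  rw [dz_sub, dz_mul, dz_mul] at h4
  have : 0 < c / NN W H := by positivity
  have h5 : c / NN W H * (dz (fun k i j => c / NN W H * zz W H k i j)
      (fun k i j => zz A H k i j + zz W B k i j) - 2 * ip W H A B / NN W H *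
      dz (fun k i j => c / NN W H * zz W H k i j) (zz W H)) = 0 := by
    rw [← h4]; ring
  rcases mul_eq_zero.1 h5 with h | h
  · exact absurd h this.ne'
  · linarith

lemma second_order (hN : 0 < NN W H) (hloc : IsLocalMin (Phi (NN W H)) (W, H))
    (hz : ∀ k i j, zz A H k i j + zz W B k i j = 0) (hip : ip W H A B = 0) :
    NN A B / NN W H * dz (zz W H) (zz W H) ≤ dz (zz W H) (zz A B) := by
  set c := NN W H with hcdef
  have h1 : ∀ᶠ t in nhds (0:ℝ), Phi c (W, H) ≤ Phi c (W + t • A, H + t • B) :=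
    (curve_tendsto W H A B).eventually hloc
  have hd := Lz_deriv (fun s k i j => c / (c + s * NN A B) * (zz W H k i j + s * zz A B k i j))
    (fun k i j => zz A B k i j - NN A B / c * zz W H k i j) 0 (by
    intro k i j
    have := scalar_deriv c c (NN A B) 0 (zz W H k i j) (zz A B k i j) 0 hN.ne'
    simp only [mul_zero, add_zero] at this
    refine this.congr_deriv ?_
    rw [div_self hN.ne']; ring)
  have hz0 : (fun k i j => c / (c + 0 * NN A B) * (zz W H k i j + 0 * zz A B k i j)) = zz W H := by
    funext k i j
    simp [div_self hN.ne']
  simp only [hz0] at hd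
  rw [dz_sub, dz_mul] at hd
  by_contra hlt
  push Not at hlt
  have hneg : dz (zz W H) (zz A B) - NN A B / c * dz (zz W H) (zz W H) < 0 := by linarith
  have h5 : ∀ᶠ s in nhdsWithin (0:ℝ) (Set.Ioi 0), slope (fun s => Lz fun k i j =>
      c / (c + s * NN A B) * (zz W H k i j + s * zz A B k i j)) 0 s < 0 := by
    have := hd.tendsto_slope
    exact (this.mono_left (nhdsWithin_mono _ (fun x hx => ne_of_gt hx))).eventually
      (gt_mem_nhds hneg)
  have h6 : Filter.Tendsto (fun s : ℝ => Real.sqrt s) (nhdsWithin (0:ℝ) (Set.Ioi 0)) (nhds 0) := by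
    have := Real.continuous_sqrt.tendsto 0
    rw [Real.sqrt_zero] at this
    exact this.mono_left nhdsWithin_le_nhds
  obtain ⟨s, hs, hs2, hs3⟩ := (h5.and ((h6.eventually h1).and self_mem_nhdsWithin)).exists
  have hs3 : 0 < s := hs3
  simp only [Phi, NN_expand, zz_expand, hz, hip, Real.sq_sqrt hs3.le, ← hcdef, mul_zero,
    add_zero, div_self hN.ne', one_mul] at hs2
  rw [slope_def_field, hz0, sub_zero] at hs
  have : 0 ≤ (Lz (fun k i j => c / (c + s * NN A B) * (zz W H k i j + s * zz A B k i j))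
    - Lz (zz W H)) / s := div_nonneg (sub_nonneg.2 hs2) hs3.le
  linarith

lemma NN_cont : Continuous (fun x : (Fin K → EuclideanSpace ℝ (Fin d)) ×
      (Fin K → Fin n → EuclideanSpace ℝ (Fin d)) => NN x.1 x.2) := by
  unfold NN WF2 HF2; fun_prop

noncomputable def dst (W' : Fin K → EuclideanSpace ℝ (Fin d))
    (H' : Fin K → Fin n → EuclideanSpace ℝ (Fin d)) : ℝ :=
  (∑ k, ‖W' k - W k‖ ^ 2) + ∑ k, ∑ i, ‖H' k i - H k i‖ ^ 2

lemma dst_cont : Continuous (fun x : (Fin K → EuclideanSpace ℝ (Fin d)) ×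
      (Fin K → Fin n → EuclideanSpace ℝ (Fin d)) => dst W H x.1 x.2) := by
  unfold dst; fun_prop

lemma dst_ev (hN : 0 < NN W H) (ε : ℝ) (hε : 0 < ε) :
    ∀ᶠ x : (Fin K → EuclideanSpace ℝ (Fin d)) ×
      (Fin K → Fin n → EuclideanSpace ℝ (Fin d)) in nhds (W, H),
      dst W H (Real.sqrt (NN W H / NN x.1 x.2) • x.1) (Real.sqrt (NN W H / NN x.1 x.2) • x.2)
        < ε := by
  have h1 : Filter.Tendsto (fun x : (Fin K → EuclideanSpace ℝ (Fin d)) ×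
      (Fin K → Fin n → EuclideanSpace ℝ (Fin d)) => Real.sqrt (NN W H / NN x.1 x.2) • x)
      (nhds (W, H)) (nhds (W, H)) := by
    have h0 : Filter.Tendsto (fun x : (Fin K → EuclideanSpace ℝ (Fin d)) ×
      (Fin K → Fin n → EuclideanSpace ℝ (Fin d)) => Real.sqrt (NN W H / NN x.1 x.2))
      (nhds (W, H)) (nhds 1) := by
      have ha : Filter.Tendsto (fun x : (Fin K → EuclideanSpace ℝ (Fin d)) ×
        (Fin K → Fin n → EuclideanSpace ℝ (Fin d)) => NN x.1 x.2) (nhds (W, H))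
        (nhds (NN W H)) := NN_cont.tendsto (W, H)
      have hb := ((tendsto_const_nhds (x := NN W H)).div ha hN.ne').sqrt
      rw [div_self hN.ne', Real.sqrt_one] at hb
      exact hb
    have h00 : Continuous (fun y : ℝ × ((Fin K → EuclideanSpace ℝ (Fin d)) ×
      (Fin K → Fin n → EuclideanSpace ℝ (Fin d))) => (y.1 • y.2.1, y.1 • y.2.2)) := by fun_prop
    have h01 := (h00.tendsto (1, (W, H))).comp (h0.prodMk_nhds Filter.tendsto_id)
    simp only [one_smul] at h01
    exact h01
  have h2 := ((dst_cont W H).tendsto (W, H)).comp h1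
  have h3 : dst W H W H < ε := by simpa [dst] using hε
  exact h2.eventually (gt_mem_nhds h3)

lemma locmin (hN : 0 < NN W H) (ε : ℝ) (hε : 0 < ε)
    (h : ∀ W' H', WF2 W' + HF2 H' = WF2 W + HF2 H →
      ((∑ k, ‖W' k - W k‖ ^ 2) + ∑ k, ∑ i, ‖H' k i - H k i‖ ^ 2) < ε → LWH W H ≤ LWH W' H') :
    IsLocalMin (Phi (NN W H)) (W, H) := by
  have hpos : ∀ᶠ x : (Fin K → EuclideanSpace ℝ (Fin d)) ×
      (Fin K → Fin n → EuclideanSpace ℝ (Fin d)) in nhds (W, H), 0 < NN x.1 x.2 :=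
    (NN_cont.tendsto (W, H)).eventually (lt_mem_nhds hN)
  have hdist := dst_ev W H hN ε hε
  filter_upwards [hpos, hdist] with x hx1 hx2
  have hq : 0 ≤ NN W H / NN x.1 x.2 := by positivity
  have h3 := h _ _ (by
    have := NN_smul x.1 x.2 (Real.sqrt (NN W H / NN x.1 x.2))
    rw [Real.sq_sqrt hq, div_mul_cancel₀ _ hx1.ne'] at this
    exact this) hx2
  rw [LWH_eq, LWH_eq] at h3
  have e1 : Phi (NN W H) (W, H) = Lz (zz W H) := by
    simp [Phi, div_self hN.ne']
  have e2 : Phi (NN W H) x = Lz (zz (Real.sqrt (NN W H / NN x.1 x.2) • x.1)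
      (Real.sqrt (NN W H / NN x.1 x.2) • x.2)) := by
    unfold Phi zz
    congr 1
    funext k i j
    simp only [Pi.smul_apply, real_inner_smul_left, real_inner_smul_right]
    rw [← mul_assoc, Real.mul_self_sqrt hq]
  rw [e1, e2]; exact h3

end

section
variable {K n d : ℕ}

/-- A feature perturbation supported on one sample. -/
noncomputable def sgl (k : Fin K) (i : Fin n) (b : EuclideanSpace ℝ (Fin d)) :
    Fin K → Fin n → EuclideanSpace ℝ (Fin d) :=
  fun k' i' => if k' = k then (if i' = i then b else 0) else 0

lemma dz_sgl (Z : Fin K → Fin n → Fin K → ℝ) (W : Fin K → EuclideanSpace ℝ (Fin d)) (k i b) :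
    dz Z (zz W (sgl k i b)) = ∑ j, gz Z k i j * ⟪W j, b⟫ := by
  unfold dz zz sgl
  rw [Finset.sum_eq_single k, Finset.sum_eq_single i]
  · simp
  · intro i' _ hi; simp [hi]
  · simp
  · intro k' _ hk; simp [hk]
  · simp

lemma ip_sgl (W : Fin K → EuclideanSpace ℝ (Fin d))
    (H : Fin K → Fin n → EuclideanSpace ℝ (Fin d)) (k i b) :
    ip W H 0 (sgl k i b) = ⟪H k i, b⟫ := by
  unfold ip sgl
  rw [Finset.sum_eq_single k (f := fun k' => ∑ i', ⟪H k' i', _⟫), Finset.sum_eq_single i]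
  · simp
  · intro i' _ hi; simp [hi]
  · simp
  · intro k' _ hk; simp [hk]
  · simp

lemma gz_of_const (Z : Fin K → Fin n → Fin K → ℝ) (h : ∀ k i j j', Z k i j = Z k i j') :
    gz Z = gz 0 := by
  funext k i j
  unfold gz pz
  have : ∀ j', Real.exp (Z k i j') = Real.exp (Z k i j) := fun j' => by rw [h k i j' j]
  simp only [this]
  simp
  field_simp

lemma Lz_of_const (Z : Fin K → Fin n → Fin K → ℝ) (h : ∀ k i j j', Z k i j = Z k i j') :
    Lz Z = ∑ _k : Fin K, ∑ _i : Fin n, Real.log K := by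
  unfold Lz
  refine Finset.sum_congr rfl fun k _ => Finset.sum_congr rfl fun i _ => ?_
  have : ∀ j', Real.exp (Z k i j') = Real.exp (Z k i k) := fun j' => by rw [h k i j' k]
  simp only [this]
  have hK : (K : ℝ) ≠ 0 := by
    have := k.pos
    positivity
  simp only [Finset.sum_const, Finset.card_univ, Fintype.card_fin, nsmul_eq_mul]
  rw [Real.log_mul hK (Real.exp_pos _).ne', Real.log_exp]
  ring

lemma lam_ne_zero (hK : 2 ≤ K) (hn : 1 ≤ n) (hd : 1 ≤ d)
    (W : Fin K → EuclideanSpace ℝ (Fin d)) (H : Fin K → Fin n → EuclideanSpace ℝ (Fin d))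
    (hN : 0 < NN W H) (hloc : IsLocalMin (Phi (NN W H)) (W, H))
    (h0 : dz (zz W H) (zz W H) = 0) : False := by
  have hZ : (fun k i j => NN W H / NN W H * zz W H k i j) = zz W H := by
    funext k i j; rw [div_self hN.ne', one_mul]
  have hFO : ∀ A B, dz (zz W H) (fun k i j => zz A H k i j + zz W B k i j) = 0 := by
    intro A B
    have := first_order W H A B hN hN hloc
    rw [hZ, h0, mul_zero] at this
    exact this
  let i0 : Fin n := ⟨0, hn⟩
  let k0 : Fin K := ⟨0, by omega⟩
  have : Nonempty (Fin K) := ⟨k0⟩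
  have hW : ∀ j j', W j = W j' := by
    have h1 : ∀ b k j, ⟪W j, b⟫ = ⟪W k, b⟫ := by
      intro b
      obtain ⟨m, hm⟩ := Finite.exists_max (fun k => ⟪W k, b⟫)
      have h2 := hFO 0 (sgl m i0 b)
      have h3 : (fun k i j => zz (0 : Fin K → EuclideanSpace ℝ (Fin d)) H k i j
          + zz W (sgl m i0 b) k i j) = zz W (sgl m i0 b) := by
        funext k i j; simp [zz]
      rw [h3, dz_sgl, gz_sum_mul] at h2
      have h4 : ∑ j, pz (zz W H) m i0 j * (⟪W m, b⟫ - ⟪W j, b⟫) = 0 := by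
        simp only [mul_sub, Finset.sum_sub_distrib, ← Finset.sum_mul, pz_sum]
        linarith
      have h5 := (Finset.sum_eq_zero_iff_of_nonneg (fun j _ =>
        mul_nonneg (pz_pos _ _ _ _).le (sub_nonneg.2 (hm j)))).1 h4
      have h6 : ∀ j, ⟪W j, b⟫ = ⟪W m, b⟫ := by
        intro j
        have := (mul_eq_zero.1 (h5 j (Finset.mem_univ j))).resolve_left (pz_pos _ _ _ _).ne'
        linarith
      intro k j
      rw [h6 j, h6 k]
    intro j j'
    exact ext_inner_right ℝ fun b => h1 b j' j
  have hconst : ∀ (c : ℝ) (H' : Fin K → Fin n → EuclideanSpace ℝ (Fin d)) k i j j',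
      c * zz W H' k i j = c * zz W H' k i j' := by
    intro c H' k i j j'; unfold zz; rw [hW j j']
  have hPhi : ∀ (H' : Fin K → Fin n → EuclideanSpace ℝ (Fin d)), Phi (NN W H) (W, H') = Phi (NN W H) (W, H) := by
    intro H'
    unfold Phi
    rw [Lz_of_const _ (hconst _ H'), Lz_of_const _ (hconst _ H)]
  have hgrad : ∀ (H' : Fin K → Fin n → EuclideanSpace ℝ (Fin d)), 0 < NN W H' →
      IsLocalMin (Phi (NN W H)) (W, H') → ∀ A, dz 0 (zz A H') = 0 := by
    intro H' hN' hl A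
    have := first_order W H' A 0 hN hN' hl
    have e1 : dz (fun k i j => NN W H / NN W H' * zz W H' k i j) (zz W H') = 0 := by
      have : zz W H' = fun k i _ => zz W H' k i k0 := by
        funext k i j; unfold zz; rw [hW j k0]
      rw [this]; exact dz_const _ _
    have e2 : (fun k i j => zz A H' k i j + zz W (0 : Fin K → Fin n → EuclideanSpace ℝ (Fin d)) k i j)
        = zz A H' := by
      funext k i j; simp [zz]
    rw [e1, mul_zero, e2] at this
    unfold dz at this ⊢
    rw [gz_of_const _ (hconst _ H')] at this
    exact this
  let e : EuclideanSpace ℝ (Fin d) := EuclideanSpace.single ⟨0, hd⟩ 1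
  have he : ⟪e, e⟫ = (1 : ℝ) := by simp [e]
  let B := sgl (K := K) (n := n) k0 i0 e
  let A : Fin K → EuclideanSpace ℝ (Fin d) := fun j => if j = k0 then e else 0
  have hev := (curve_tendsto W H 0 B).eventually
    ((eventually_eventually_nhds.2 hloc).and
      ((NN_cont.tendsto (W, H)).eventually (lt_mem_nhds hN)))
  have hev2 : ∀ᶠ t in nhdsWithin (0:ℝ) (Set.Ioi 0), _ := nhdsWithin_le_nhds hev
  obtain ⟨t, ⟨ht1, ht2⟩, ht3⟩ := (hev2.and self_mem_nhdsWithin).exists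
  have ht3 : 0 < t := ht3
  simp only [smul_zero, add_zero] at ht1 ht2
  have hl : IsLocalMin (Phi (NN W H)) (W, H + t • B) := by
    filter_upwards [ht1] with y hy
    rw [hPhi]; exact hy
  have g1 := hgrad _ ht2 hl A
  have g2 := hgrad _ hN hloc A
  have g3 : zz A (H + t • B) = fun k i j => zz A H k i j + t * zz A B k i j := by
    funext k i j
    simp only [zz, Pi.add_apply, Pi.smul_apply, inner_add_right, real_inner_smul_right]
  rw [g3, dz_add 0 (zz A H) (fun k i j => t * zz A B k i j), dz_mul, g2, zero_add] at g1
  have g4 := (mul_eq_zero.1 g1).resolve_left ht3.ne'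
  rw [dz_sgl] at g4
  have g5 : ∑ j, gz (0 : Fin K → Fin n → Fin K → ℝ) k0 i0 j * ⟪A j, e⟫
      = gz (0 : Fin K → Fin n → Fin K → ℝ) k0 i0 k0 := by
    rw [Finset.sum_eq_single k0]
    · simp only [A, if_true, he, mul_one]
    · intro j _ hj; simp [A, hj]
    · simp
  rw [g5] at g4
  unfold gz pz at g4
  simp at g4
  have hK' : (2 : ℝ) ≤ K := by exact_mod_cast hK
  have : (K : ℝ)⁻¹ < 1 := inv_lt_one_of_one_lt₀ (by linarith)
  linarith

lemma spec_bound (hd : K - 1 ≤ d)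
    (W : Fin K → EuclideanSpace ℝ (Fin d)) (H : Fin K → Fin n → EuclideanSpace ℝ (Fin d))
    (hK : 2 ≤ K) (lam : ℝ) (hlam : 0 < lam)
    (hFO : ∀ A B, dz (zz W H) (fun k i j => zz A H k i j + zz W B k i j) = -lam * ip W H A B)
    (hSO : ∀ A B, (∀ k i j, zz A H k i j + zz W B k i j = 0) → ip W H A B = 0 →
      -(lam / 2) * NN A B ≤ dz (zz W H) (zz A B))
    (hsum : ∑ k, W k = 0)
    (hbal : ∀ a, ∑ k, ⟪W k, a⟫ ^ 2 = ∑ k, ∑ i, ⟪H k i, a⟫ ^ 2)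
    (u : Fin K → ℝ) (v : Fin K → Fin n → ℝ) :
    -(lam / 2) * (∑ j, u j ^ 2 + ∑ k, ∑ i, v k i ^ 2)
      ≤ dz (zz W H) (fun k i j => u j * v k i) := by
  by_cases hinj : ∀ a : EuclideanSpace ℝ (Fin d), (∀ k, ⟪W k, a⟫ = 0) → a = 0
  · let T : EuclideanSpace ℝ (Fin d) →ₗ[ℝ] (Fin K → ℝ) :=
      LinearMap.pi fun k => (innerₛₗ ℝ (W k))
    have hT : ∀ a k, T a k = ⟪W k, a⟫ := fun a k => rfl
    let S : Submodule ℝ (Fin K → ℝ) := LinearMap.ker (∑ k, LinearMap.proj (R := ℝ) (φ := fun _ : Fin K => ℝ) k)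
    have hS : ∀ x : Fin K → ℝ, x ∈ S ↔ ∑ k, x k = 0 := by
      intro x
      simp [S, LinearMap.mem_ker, LinearMap.sum_apply]
    have hTinj : Function.Injective T := by
      rw [← LinearMap.ker_eq_bot, LinearMap.ker_eq_bot']
      intro a ha
      exact hinj a fun k => by rw [← hT, ha]; rfl
    have hle : LinearMap.range T ≤ S := by
      rintro _ ⟨a, rfl⟩
      rw [hS]
      simp only [hT]
      rw [← sum_inner, hsum, inner_zero_left]
    have hfr : Module.finrank ℝ (LinearMap.range T) = d := by
      rw [LinearMap.finrank_range_of_inj hTinj]; simp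
    have hSlt : Module.finrank ℝ S < K := by
      have : S ≠ ⊤ := by
        intro htop
        have h1 : (fun _ => (1 : ℝ)) ∈ S := by rw [htop]; trivial
        rw [hS] at h1
        simp at h1
        omega
      have := Submodule.finrank_lt this
      simpa using this
    have heq : LinearMap.range T = S :=
      Submodule.eq_of_le_of_finrank_le hle (by omega)
    have hKpos : (0 : ℝ) < K := by have : 0 < K := by omega
                                   exact_mod_cast this
    set m := (∑ j, u j) / K with hm
    have hu0 : (fun j => u j - m) ∈ LinearMap.range T := by
      rw [heq, hS, Finset.sum_sub_distrib]
      simp [hm]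
      field_simp
      simp
    obtain ⟨a, ha⟩ := hu0
    have ha' : ∀ j, u j = ⟪W j, a⟫ + m := by
      intro j
      have := congrFun ha j
      rw [hT] at this
      linarith
    have hdec : dz (zz W H) (fun k i j => u j * v k i)
        = dz (zz W H) (fun k i j => zz 0 H k i j + zz W (fun k i => v k i • a) k i j) := by
      have : (fun k i j => u j * v k i) = (fun k i j =>
          (zz (0 : Fin K → EuclideanSpace ℝ (Fin d)) H k i j + zz W (fun k i => v k i • a) k i j)
            + m * v k i) := by
        funext k i j
        rw [ha' j]
        simp only [zz, Pi.zero_apply, inner_zero_left, real_inner_smul_right]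
        ring
      rw [this, dz_add _ _ (fun k i _ => m * v k i), dz_const, add_zero]
    rw [hdec, hFO]
    have hip : ip W H 0 (fun k i => v k i • a) = ∑ k, ∑ i, v k i * ⟪H k i, a⟫ := by
      simp [ip, real_inner_smul_right]
    rw [hip]
    have hu2 : ∑ k, ⟪W k, a⟫ ^ 2 ≤ ∑ j, u j ^ 2 := by
      have h1 : ∀ j, u j ^ 2 = ⟪W j, a⟫ ^ 2 + (2 * m * ⟪W j, a⟫ + m ^ 2) := by
        intro j; rw [ha' j]; ring
      have h2 : ∑ j, ⟪W j, a⟫ = 0 := by rw [← sum_inner, hsum, inner_zero_left]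
      simp only [h1, Finset.sum_add_distrib, ← Finset.mul_sum, h2]
      have : 0 ≤ ∑ _j : Fin K, m ^ 2 := by positivity
      linarith
    rw [hbal] at hu2
    have hcs : 2 * ∑ k, ∑ i, v k i * ⟪H k i, a⟫
        ≤ ∑ k, ∑ i, v k i ^ 2 + ∑ k, ∑ i, ⟪H k i, a⟫ ^ 2 := by
      simp only [Finset.mul_sum, ← Finset.sum_add_distrib]
      refine Finset.sum_le_sum fun k _ => Finset.sum_le_sum fun i _ => ?_
      nlinarith [sq_nonneg (v k i - ⟪H k i, a⟫)]
    nlinarith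
  · push Not at hinj
    obtain ⟨a0, ha0, hne⟩ := hinj
    obtain ⟨a, ha, hnorm⟩ : ∃ a : EuclideanSpace ℝ (Fin d), (∀ k, ⟪W k, a⟫ = 0) ∧ ‖a‖ = 1 :=
      ⟨‖a0‖⁻¹ • a0, fun k => by rw [real_inner_smul_right, ha0, mul_zero],
        by rw [norm_smul, norm_inv, norm_norm, inv_mul_cancel₀ (norm_ne_zero_iff.2 hne)]⟩
    have hb := hbal a
    simp only [ha] at hb
    have hb' : ∑ k, ∑ i, ⟪H k i, a⟫ ^ 2 = 0 := by rw [← hb]; simp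
    have hHa : ∀ k i, ⟪H k i, a⟫ = 0 := by
      intro k i
      have h5 := (Finset.sum_eq_zero_iff_of_nonneg (fun k _ => by positivity)).1 hb' k (by simp)
      have := (Finset.sum_eq_zero_iff_of_nonneg (fun k _ => by positivity)).1 h5 i (by simp)
      simpa using this
    have h1 := hSO (fun j => u j • a) (fun k i => v k i • a) (by
      intro k i j
      simp only [zz, real_inner_smul_left, real_inner_smul_right, ha, real_inner_comm, hHa]
      simp) (by
      simp only [ip, real_inner_smul_right, ha, hHa]; simp)
    have h2 : NN (fun j => u j • a) (fun k i => v k i • a)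
        = ∑ j, u j ^ 2 + ∑ k, ∑ i, v k i ^ 2 := by
      simp [NN, WF2, HF2, norm_smul, hnorm]
    have h3 : zz (fun j => u j • a) (fun k i => v k i • a) = fun k i j => u j * v k i := by
      funext k i j
      simp only [zz, real_inner_smul_left, real_inner_smul_right, real_inner_self_eq_norm_sq, hnorm]
      ring
    rw [h2, h3] at h1
    exact h1

lemma all_bound (W : Fin K → EuclideanSpace ℝ (Fin d))
    (H : Fin K → Fin n → EuclideanSpace ℝ (Fin d)) (lam : ℝ)
    (hs : ∀ (u : Fin K → ℝ) (v : Fin K → Fin n → ℝ),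
      -(lam / 2) * (∑ j, u j ^ 2 + ∑ k, ∑ i, v k i ^ 2)
      ≤ dz (zz W H) (fun k i j => u j * v k i))
    (W' : Fin K → EuclideanSpace ℝ (Fin d)) (H' : Fin K → Fin n → EuclideanSpace ℝ (Fin d)) :
    -(lam / 2) * NN W' H' ≤ dz (zz W H) (zz W' H') := by
  have h1 : NN W' H' = ∑ l, (∑ j, W' j l ^ 2 + ∑ k, ∑ i, H' k i l ^ 2) := by
    unfold NN WF2 HF2
    simp only [EuclideanSpace.real_norm_sq_eq]
    rw [Finset.sum_add_distrib]
    congr 1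
    · rw [Finset.sum_comm]
    · rw [Finset.sum_comm (s := (univ : Finset (Fin d)))]
      refine Finset.sum_congr rfl fun k _ => ?_
      rw [Finset.sum_comm]
  have h2 : dz (zz W H) (zz W' H') = ∑ l, dz (zz W H) (fun k i j => W' j l * H' k i l) := by
    unfold dz
    rw [Finset.sum_comm (s := (univ : Finset (Fin d)))]
    refine Finset.sum_congr rfl fun k _ => ?_
    rw [Finset.sum_comm (s := (univ : Finset (Fin d)))]
    refine Finset.sum_congr rfl fun i _ => ?_
    rw [Finset.sum_comm (s := (univ : Finset (Fin d)))]
    refine Finset.sum_congr rfl fun j _ => ?_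
    rw [← Finset.mul_sum]
    congr 1
    simp only [zz, PiLp.inner_apply]
    refine Finset.sum_congr rfl fun l _ => ?_
    simp [mul_comm]
  rw [h1, h2, Finset.mul_sum]
  exact Finset.sum_le_sum fun l _ => hs _ _

end
section
variable {K n d : ℕ}

lemma perm_inv (W : Fin K → EuclideanSpace ℝ (Fin d))
    (H : Fin K → Fin n → EuclideanSpace ℝ (Fin d)) (lam : ℝ)
    (hK : 2 ≤ K)
    (hZZ : dz (zz W H) (zz W H) = -(lam / 2) * NN W H)
    (hall : ∀ (W' : Fin K → EuclideanSpace ℝ (Fin d))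
      (H' : Fin K → Fin n → EuclideanSpace ℝ (Fin d)),
      -(lam / 2) * NN W' H' ≤ dz (zz W H) (zz W' H'))
    (hsum : ∑ k, W k = 0) (σ : Equiv.Perm (Fin K)) (τ : Equiv.Perm (Fin n)) (k i j) :
    ⟪W (σ j), H (σ k) (τ i)⟫ = ⟪W j, H k i⟫ := by
  set W' : Fin K → EuclideanSpace ℝ (Fin d) := fun j => W (σ j) with hW'
  set H' : Fin K → Fin n → EuclideanSpace ℝ (Fin d) := fun k i => H (σ k) (τ i) with hH'
  have hNN : NN W' H' = NN W H := by
    unfold NN WF2 HF2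
    congr 1
    · exact Equiv.sum_comp σ (fun k => ‖W k‖ ^ 2)
    · rw [← Equiv.sum_comp σ (fun k => ∑ i, ‖H k i‖ ^ 2)]
      refine Finset.sum_congr rfl fun k _ => ?_
      exact Equiv.sum_comp τ (fun i => ‖H (σ k) i‖ ^ 2)
  have hL : Lz (zz W' H') = Lz (zz W H) := by
    unfold Lz zz
    rw [← Equiv.sum_comp σ (fun k => ∑ i, (Real.log (∑ j, Real.exp ⟪W j, H k i⟫) - ⟪W k, H k i⟫))]
    refine Finset.sum_congr rfl fun k _ => ?_
    rw [← Equiv.sum_comp τ (fun i => (Real.log (∑ j, Real.exp ⟪W j, H (σ k) i⟫)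
      - ⟪W (σ k), H (σ k) i⟫))]
    refine Finset.sum_congr rfl fun i _ => ?_
    rw [← Equiv.sum_comp σ (fun j => Real.exp ⟪W j, H (σ k) (τ i)⟫)]
  have h1 := Lz_strict (zz W H) (zz W' H') (by
    rw [dz_sub, hZZ, hL]
    have := hall W' H'
    rw [hNN] at this
    linarith) k i
  have hsum' : ∑ j, W' j = 0 := by
    rw [← hsum]; exact Equiv.sum_comp σ W
  have h2 : ∑ j', (zz W' H' k i j' - zz W H k i j') = 0 := by
    rw [Finset.sum_sub_distrib]
    unfold zz
    rw [← sum_inner, ← sum_inner, hsum, hsum']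
    simp
  rw [Finset.sum_congr rfl (fun j' _ => h1 j' j)] at h2
  simp only [Finset.sum_const, Finset.card_univ, Fintype.card_fin, nsmul_eq_mul] at h2
  have hK' : (K : ℝ) ≠ 0 := by
    have : K ≠ 0 := by omega
    exact_mod_cast this
  have h3 := (mul_eq_zero.1 h2).resolve_left hK'
  exact sub_eq_zero.1 h3

lemma final_nc (hK : 2 ≤ K) (hn : 1 ≤ n) (W : Fin K → EuclideanSpace ℝ (Fin d))
    (H : Fin K → Fin n → EuclideanSpace ℝ (Fin d)) (lam : ℝ) (hlam : 0 < lam) (hN : 0 < NN W H)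
    (hFO : ∀ A B, dz (zz W H) (fun k i j => zz A H k i j + zz W B k i j) = -lam * ip W H A B)
    (hsum : ∑ k, W k = 0)
    (hinv : ∀ (σ : Equiv.Perm (Fin K)) (τ : Equiv.Perm (Fin n)) k i j,
      ⟪W (σ j), H (σ k) (τ i)⟫ = ⟪W j, H k i⟫) : NeuralCollapse W H := by
  let i0 : Fin n := ⟨0, hn⟩
  let k0 : Fin K := ⟨0, by omega⟩
  have hK2 : (2 : ℝ) ≤ K := by exact_mod_cast hK
  set c := ⟪W k0, H k0 i0⟫ with hc
  have hdiag : ∀ k i, ⟪W k, H k i⟫ = c := by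
    intro k i
    have := hinv (Equiv.swap k k0) (Equiv.swap i i0) k i k
    rw [Equiv.swap_apply_left, Equiv.swap_apply_left] at this
    exact this.symm
  have hoff : ∀ k i j, j ≠ k → ⟪W j, H k i⟫ = -c / ((K : ℝ) - 1) := by
    intro k i j hj
    have h1 : ∀ j', ⟪W j', H k i⟫ = ⟪W j, H k i⟫ + if j' = k then c - ⟪W j, H k i⟫ else 0 := by
      intro j'
      split_ifs with h
      · rw [h, hdiag]; ring
      · have := hinv (Equiv.swap j j') 1 k i j
        rw [Equiv.swap_apply_left, Equiv.swap_apply_of_ne_of_ne (Ne.symm hj) (Ne.symm h)] at this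
        rw [add_zero]; exact this
    have h2 : ∑ j', ⟪W j', H k i⟫ = 0 := by rw [← sum_inner, hsum, inner_zero_left]
    rw [Finset.sum_congr rfl (fun j' _ => h1 j'), Finset.sum_add_distrib] at h2
    simp at h2
    rw [eq_div_iff (by linarith)]
    linarith
  set e := Real.exp c
  set e' := Real.exp (-c / ((K : ℝ) - 1))
  have he' : 0 < e' := Real.exp_pos _
  have he : 0 < e := Real.exp_pos _
  have hexp : ∀ k i j, Real.exp (zz W H k i j) = e' + if j = k then e - e' else 0 := by
    intro k i j
    unfold zz
    split_ifs with h
    · rw [h, hdiag]; ring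
    · rw [hoff k i j h, add_zero]
  have hS : ∀ k i, ∑ j, Real.exp (zz W H k i j) = K * e' + (e - e') := by
    intro k i
    simp only [hexp, Finset.sum_add_distrib]
    simp
  set S := K * e' + (e - e') with hSdef
  have hSpos : 0 < S := by nlinarith
  set β := K * e' / S with hβ
  have hβpos : 0 < β := by positivity
  have hrel : ∀ k i, lam • H k i = β • W k := by
    intro k i
    refine ext_inner_right ℝ fun b => ?_
    have h2 := hFO 0 (sgl k i b)
    have h3 : (fun k' i' j => zz (0 : Fin K → EuclideanSpace ℝ (Fin d)) H k' i' j
        + zz W (sgl k i b) k' i' j) = zz W (sgl k i b) := by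
      funext k' i' j; simp [zz]
    rw [h3, dz_sgl, gz_sum_mul, ip_sgl] at h2
    have h4 : ∑ j, pz (zz W H) k i j * ⟪W j, b⟫ = (e - e') / S * ⟪W k, b⟫ := by
      have : ∀ j, pz (zz W H) k i j * ⟪W j, b⟫
          = e' / S * ⟪W j, b⟫ + if j = k then (e - e') / S * ⟪W k, b⟫ else 0 := by
        intro j
        unfold pz
        rw [hS, hexp]
        split_ifs with h
        · rw [h]; ring
        · ring
      simp only [this, Finset.sum_add_distrib, ← Finset.mul_sum]
      rw [← sum_inner, hsum]
      simp
    rw [h4] at h2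
    rw [real_inner_smul_left, real_inner_smul_left]
    have h5 : β = 1 - (e - e') / S := by
      rw [hβ, eq_sub_iff_add_eq, ← add_div, div_eq_one_iff_eq hSpos.ne']
    rw [h5]
    linarith
  have hH : ∀ k i, H k i = (β / lam) • W k := by
    intro k i
    rw [div_eq_inv_mul, mul_smul, ← hrel k i, smul_smul, inv_mul_cancel₀ hlam.ne', one_smul]
  have hW : ∀ k i, W k = (lam / β) • H k i := by
    intro k i
    rw [div_eq_inv_mul, mul_smul, hrel k i, smul_smul, inv_mul_cancel₀ hβpos.ne', one_smul]
  have hHH : ∀ k j i i', ⟪H k i, H j i'⟫ = β / lam * ⟪W k, H j i'⟫ := by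
    intro k j i i'
    rw [hH k i, real_inner_smul_left]
  have hnorm : ∀ k i, ‖H k i‖ ^ 2 = β / lam * c := by
    intro k i
    rw [← real_inner_self_eq_norm_sq, hHH, hdiag]
  have hnormeq : ∀ k k' i i', ‖H k i‖ = ‖H k' i'‖ := by
    intro k k' i i'
    have : ‖H k i‖ ^ 2 = ‖H k' i'‖ ^ 2 := by rw [hnorm, hnorm]
    exact (sq_eq_sq₀ (norm_nonneg _) (norm_nonneg _)).1 this
  refine ⟨?_, hsum, ?_, hnormeq, ?_, ?_, lam / β, by positivity, hW⟩
  · intro k i i'; rw [hH k i, hH k i']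
  · intro k k'
    rw [hW k i0, hW k' i0, norm_smul, norm_smul, hnormeq k k' i0 i0]
  · intro k i h0
    have hz : ∀ k' i', H k' i' = 0 := by
      intro k' i'
      rw [← norm_eq_zero, hnormeq k' k i' i, h0, norm_zero]
    have hw : ∀ k', W k' = 0 := by
      intro k'; rw [hW k' i0, hz, smul_zero]
    have : NN W H = 0 := by simp [NN, WF2, HF2, hz, hw]
    linarith
  · intro k j hkj i i'
    rw [hHH, hoff j i' k hkj, hnormeq j k i' i, ← sq, hnorm]
    ring

lemma main_nc (hK : 2 ≤ K) (hn : 1 ≤ n) (hd : K - 1 ≤ d) (W : Fin K → EuclideanSpace ℝ (Fin d))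
    (H : Fin K → Fin n → EuclideanSpace ℝ (Fin d)) (hN : 0 < NN W H)
    (hloc : IsLocalMin (Phi (NN W H)) (W, H)) : NeuralCollapse W H ∧ WF2 W = HF2 H := by
  have hZ : (fun k i j => NN W H / NN W H * zz W H k i j) = zz W H := by
    funext k i j; rw [div_self hN.ne', one_mul]
  obtain ⟨lam, hl⟩ : ∃ lam : ℝ, lam = -2 * dz (zz W H) (zz W H) / NN W H := ⟨_, rfl⟩
  have hZZ : dz (zz W H) (zz W H) = -(lam / 2) * NN W H := by
    rw [hl]; field_simp
  have hFO : ∀ A B, dz (zz W H) (fun k i j => zz A H k i j + zz W B k i j)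
      = -lam * ip W H A B := by
    intro A B
    have := first_order W H A B hN hN hloc
    rw [hZ, hZZ] at this
    rw [this]; field_simp
  have hSO : ∀ A B, (∀ k i j, zz A H k i j + zz W B k i j = 0) → ip W H A B = 0 →
      -(lam / 2) * NN A B ≤ dz (zz W H) (zz A B) := by
    intro A B h1 h2
    have := second_order W H A B hN hloc h1 h2
    rw [hZZ] at this
    refine le_trans (le_of_eq ?_) this
    field_simp
  have hlne : lam ≠ 0 := by
    intro h0
    exact lam_ne_zero hK hn (by omega) W H hN hloc (by rw [hZZ, h0]; ring)
  have hzneg : ∀ k i j, zz W H k i j + zz W (-H) k i j = 0 := by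
    intro k i j; simp [zz]
  have hdz0 : dz (zz W H) (fun _ _ _ => 0) = 0 := by simp [dz]
  have hipW : ip W H W (-H) = 0 := by
    have h1 := hFO W (-H)
    simp only [hzneg, hdz0] at h1
    have h2 : lam * ip W H W (-H) = 0 := by linarith
    exact (mul_eq_zero.1 h2).resolve_left hlne
  have hWH : WF2 W = HF2 H := by
    have : ip W H W (-H) = WF2 W - HF2 H := by
      simp [ip, WF2, HF2, sub_eq_add_neg]
    linarith
  have hlpos : 0 < lam := by
    have h1 := hSO W (-H) hzneg hipW
    have h2 : zz W (-H) = fun k i j => (-1) * zz W H k i j := by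
      funext k i j; simp [zz]
    have h3 : NN W (-H) = NN W H := by simp [NN, HF2]
    rw [h2, dz_mul, hZZ, h3] at h1
    have h4 : 0 ≤ lam * NN W H := by linarith
    exact lt_of_le_of_ne (nonneg_of_mul_nonneg_left h4 hN) (Ne.symm hlne)
  have hsum : ∑ k, W k = 0 := by
    refine ext_inner_right ℝ fun b => ?_
    have h1 := hFO (fun _ => b) 0
    have h2 : (fun k i j => zz (fun _ : Fin K => b) H k i j
        + zz W (0 : Fin K → Fin n → EuclideanSpace ℝ (Fin d)) k i j)
        = fun k i _ => ⟪b, H k i⟫ := by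
      funext k i j; simp [zz]
    rw [h2, dz_const] at h1
    have h3 : ip W H (fun _ => b) 0 = ⟪∑ k, W k, b⟫ := by
      simp [ip, sum_inner]
    rw [h3] at h1
    rw [inner_zero_left]
    have h2 : lam * ⟪∑ k, W k, b⟫ = 0 := by linarith
    exact (mul_eq_zero.1 h2).resolve_left hlne
  have hbal : ∀ a, ∑ k, ⟪W k, a⟫ ^ 2 = ∑ k, ∑ i, ⟪H k i, a⟫ ^ 2 := by
    intro a
    have h1 := hFO (fun k => ⟪W k, a⟫ • a) (fun k i => -(⟪H k i, a⟫ • a))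
    have h2 : ∀ k i j, zz (fun k => ⟪W k, a⟫ • a) H k i j
        + zz W (fun k i => -(⟪H k i, a⟫ • a)) k i j = 0 := by
      intro k i j
      simp only [zz, real_inner_smul_left, real_inner_smul_right, inner_neg_right]
      rw [real_inner_comm a (H k i)]; ring
    simp only [h2, hdz0] at h1
    have h3 : ip W H (fun k => ⟪W k, a⟫ • a) (fun k i => -(⟪H k i, a⟫ • a))
        = ∑ k, ⟪W k, a⟫ ^ 2 - ∑ k, ∑ i, ⟪H k i, a⟫ ^ 2 := by
      simp [ip, real_inner_smul_right, sq, sub_eq_add_neg]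
    rw [h3] at h1
    have h2 : lam * (∑ k, ⟪W k, a⟫ ^ 2 - ∑ k, ∑ i, ⟪H k i, a⟫ ^ 2) = 0 := by linarith
    have := (mul_eq_zero.1 h2).resolve_left hlne
    linarith
  have hall := all_bound W H lam (spec_bound hd W H hK lam hlpos hFO hSO hsum hbal)
  have hinv := perm_inv W H lam hK hZZ hall hsum
  exact ⟨final_nc hK hn W H lam hlpos hN hFO hsum hinv, hWH⟩

end

end NCProof

theorem non_optimal_points_are_not_local_minima_on_sphere {K n d : ℕ}
    (hK : 2 ≤ K) (hn : 1 ≤ n) (hd : K - 1 ≤ d)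
    (W : Fin K → EuclideanSpace ℝ (Fin d)) (H : Fin K → Fin n → EuclideanSpace ℝ (Fin d))
    (hne : ¬(W = 0 ∧ H = 0))
    (hnot : ¬(NeuralCollapse W H ∧ Real.sqrt (WF2 W) = Real.sqrt (HF2 H))) :
    ∀ ε : ℝ, 0 < ε →
      ∃ (W' : Fin K → EuclideanSpace ℝ (Fin d)) (H' : Fin K → Fin n → EuclideanSpace ℝ (Fin d)),
        WF2 W' + HF2 H' = WF2 W + HF2 H ∧
        ((∑ k, ‖W' k - W k‖ ^ 2) + ∑ k, ∑ i, ‖H' k i - H k i‖ ^ 2) < ε ∧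
        LWH W' H' < LWH W H := by
  intro ε hε
  by_contra hcon
  push Not at hcon
  have hN := NCProof.NN_pos W H hne
  have h := NCProof.main_nc hK hn hd W H hN (NCProof.locmin W H hN ε hε hcon)
  exact hnot ⟨h.1, by rw [h.2]⟩
end

section
/- If q_min(W,H) ≥ 0, then Σ_{k=1}^K Σ_{i=1}^n Σ_{j≠k} p_{k,i,j}(W,H)·s_{k,i,j}(W,H) ≥ q_min(W,H)·(1 − exp(−L(W,H))). -/
open scoped BigOperators RealInnerProductSpace
open Finset

noncomputable def pWH {K n d : ℕ} (W : Fin K → EuclideanSpace ℝ (Fin d))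
    (H : Fin K → Fin n → EuclideanSpace ℝ (Fin d)) (k : Fin K) (i : Fin n) (j : Fin K) : ℝ :=
  Real.exp (-(sWH W H k i j)) /
    (1 + ∑ l ∈ univ.filter (fun l => l ≠ k), Real.exp (-(sWH W H k i l)))

lemma one_sub_exp_neg_sum_le {ι : Type*} (s : Finset ι) (f : ι → ℝ) (hf : ∀ i ∈ s, 0 ≤ f i) :
    1 - Real.exp (-(∑ i ∈ s, f i)) ≤ ∑ i ∈ s, (1 - Real.exp (-(f i))) := by
  classical
  induction s using Finset.induction_on with
  | empty => simp
  | insert a s ha ih =>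
    rw [Finset.sum_insert ha, Finset.sum_insert ha]
    have h1 := ih (fun i hi => hf i (Finset.mem_insert_of_mem hi))
    have h2 : 0 ≤ f a := hf a (Finset.mem_insert_self a s)
    have h3 : 0 ≤ ∑ i ∈ s, f i :=
      Finset.sum_nonneg (fun i hi => hf i (Finset.mem_insert_of_mem hi))
    have h4 : Real.exp (-(f a)) ≤ 1 := Real.exp_le_one_iff.mpr (by linarith)
    have h5 : Real.exp (-(∑ i ∈ s, f i)) ≤ 1 := Real.exp_le_one_iff.mpr (by linarith)
    rw [neg_add, Real.exp_add]
    nlinarith [mul_nonneg (sub_nonneg.mpr h4) (sub_nonneg.mpr h5)]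

theorem weighted_margin_lower_bound {K n d : ℕ} (hK : 2 ≤ K) (hn : 1 ≤ n) (hd : 1 ≤ d)
    (W : Fin K → EuclideanSpace ℝ (Fin d)) (H : Fin K → Fin n → EuclideanSpace ℝ (Fin d))
    (hq : 0 ≤ qmin W H) :
    qmin W H * (1 - Real.exp (-(LWH W H)))
      ≤ ∑ k, ∑ i, ∑ j ∈ univ.filter (fun j => j ≠ k), pWH W H k i j * sWH W H k i j := by
  have hle : ∀ k i j, j ≠ k → qmin W H ≤ sWH W H k i j := by
    intro k i j hj
    apply csInf_le
    · have hfin : (Set.range (fun t : Fin K × Fin n × Fin K => sWH W H t.1 t.2.1 t.2.2)).Finite :=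
        Set.finite_range _
      refine hfin.bddBelow.mono ?_
      rintro x ⟨k, i, j, _, rfl⟩
      exact ⟨(k, i, j), rfl⟩
    · exact ⟨k, i, j, hj, rfl⟩
  have hS : ∀ k i, 0 ≤ ∑ j ∈ univ.filter (fun j => j ≠ k), Real.exp (-(sWH W H k i j)) :=
    fun k i => Finset.sum_nonneg (fun j _ => (Real.exp_pos _).le)
  have hlog : ∀ k i, 0 ≤ Real.log
      (1 + ∑ j ∈ univ.filter (fun j => j ≠ k), Real.exp (-(sWH W H k i j))) :=
    fun k i => Real.log_nonneg (by linarith [hS k i])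
  have hL : 1 - Real.exp (-(LWH W H)) ≤
      ∑ k, ∑ i, ∑ j ∈ univ.filter (fun j => j ≠ k), pWH W H k i j := by
    unfold LWH
    refine (one_sub_exp_neg_sum_le _ _
      (fun k _ => Finset.sum_nonneg (fun i _ => hlog k i))).trans ?_
    refine Finset.sum_le_sum (fun k _ => ?_)
    refine (one_sub_exp_neg_sum_le _ _ (fun i _ => hlog k i)).trans ?_
    refine Finset.sum_le_sum (fun i _ => ?_)
    have hpos : 0 < 1 + ∑ j ∈ univ.filter (fun j => j ≠ k), Real.exp (-(sWH W H k i j)) := by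
      linarith [hS k i]
    unfold pWH
    rw [Real.exp_neg, Real.exp_log hpos, ← Finset.sum_div]
    apply le_of_eq
    field_simp
    ring
  refine (mul_le_mul_of_nonneg_left hL hq).trans ?_
  simp only [Finset.mul_sum]
  refine Finset.sum_le_sum (fun k _ => Finset.sum_le_sum (fun i _ => Finset.sum_le_sum ?_))
  intro j hj
  rw [mul_comm]
  refine mul_le_mul_of_nonneg_left (hle k i j (Finset.mem_filter.mp hj).2) ?_
  unfold pWH
  exact div_nonneg (Real.exp_pos _).le (by linarith [hS k i])
end
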